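/- arXiv:2305.08355 — 2 statements merged into one kernel-verified Lean document; each statement's English description precedes it below -/
import Mathlib

section
/- Let Ω ⊆ ℝ^N be an open set, let {p_k} ⊂ 𝒫(Ω) ∩ L¹(Ω) and {v_k} ⊂ W^{1,1}(Ω;ℝ^d). If p_k → p₀ in L¹(Ω) and v_k ⇀ v weakly in W^{1,1}_loc(Ω;ℝ^d), then ∫_Ω |∇v(x)|^{p₀(x)} dx ≤ liminf_{k→∞} ∫_Ω |∇v_k(x)|^{p_k(x)} dx. If in addition sup_k ∫_Ω |∇v_k|^{p_k(x)} dx < ∞, then ∇v ∈ L^{p₀(·)}(Ω;ℝ^{d×N}); and if moreover Ω is a Lipschitz bounded open set, p₀ ∈ C(Ω̄), and v ∈ L¹(Ω;ℝ^d), then v ∈ W^{1,p₀(·)}(Ω;ℝ^d). -/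
/-!
The lower semicontinuity rests on the tangent line inequality
`s ^ p ≥ t ^ p + p t ^ (p - 1) (s - t)` with `t = |∇v|`, `s = |∇v_k|`, `p = p_k(x)`, and on
`|∇v_k| - |∇v| ≥ ν · (∇v_k - ∇v)` with `ν = ∇v / |∇v|`. Along a subsequence `p_k → p₀` almost
everywhere, so by Egorov's theorem the slopes `p_k t ^ (p_k - 1)` converge uniformly to a bounded
function off a small set; there the weak convergence of the gradients removes the linear term and
Fatou's lemma gives the bound (`lintegral_rpow_le_of_weak`). An exhaustion of `Ω` by compactly
contained sets turns this into the global statement (`emod_le_liminf`), and finiteness of the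
limit modular follows at once.

The last assertion, finiteness of the modular of `v` itself, is local by compactness of `closure Ω`.
A set with Lipschitz boundary satisfies a uniform cone condition near every point of its closure
(`exists_cone`). Averaging `v` against a bump moved along the cone with vertex `y`, and integrating
by parts, gives the representation estimate `|v(y)| ≤ A + B P(y)` for almost every `y`, where `P` is
the potential `∫ (cone average of |∇v| at scale τ) τ⁻² dτ` (`ae_enorm_le_conePotential`). This
potential maps `L^q` to `L^{qs}` for some `s > 1` depending only on the dimension
(`lintegral_conePotential_lt_top`). Since `p₀` is continuous on `closure Ω`, near each point there
is a constant `q` with `1 ≤ q ≤ p₀ ≤ q s`, and the gain of integrability closes the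
argument (`emod_norm_lt_top`). No Sobolev extension or embedding theorem is needed.
-/

open MeasureTheory Filter Topology Set
open scoped ENNReal NNReal

noncomputable section

/-- `ℝ^n` as a Euclidean space. -/
abbrev Euc (n : ℕ) := EuclideanSpace ℝ (Fin n)

/-- `d × n` real matrices (gradients of maps `ℝ^n → ℝ^d`). -/
abbrev Mat (d n : ℕ) := Fin d → Fin n → ℝ

/-- Euclidean (Frobenius) norm of a matrix. -/
def mnorm {d n : ℕ} (ξ : Mat d n) : ℝ := Real.sqrt (∑ i, ∑ j, (ξ i j)^2)

/-- `G` is a weak (distributional) gradient of `v` on the open set `Ω`. -/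
def IsWeakGrad {n d : ℕ} (Ω : Set (Euc n)) (v : Euc n → Euc d) (G : Euc n → Mat d n) : Prop :=
  ∀ φ : Euc n → ℝ, ContDiff ℝ (⊤ : ℕ∞) φ → HasCompactSupport φ → tsupport φ ⊆ Ω →
    ∀ i : Fin d, ∀ j : Fin n,
      ∫ x in Ω, φ x * G x i j = - ∫ x in Ω, (fderiv ℝ φ x (EuclideanSpace.single j 1)) * v x i

/-- Membership in `W^{1,1}(Ω;ℝ^d)` with weak gradient `G`. -/
def MemW11 {n d : ℕ} (Ω : Set (Euc n)) (v : Euc n → Euc d) (G : Euc n → Mat d n) : Prop :=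
  IntegrableOn v Ω ∧ (∀ i j, IntegrableOn (fun x => G x i j) Ω) ∧ IsWeakGrad Ω v G

/-- The open unit cube `(-1/2,1/2)^n`. -/
def unitCube (n : ℕ) : Set (Euc n) := {x | ∀ j, |x j| < 1/2}

/-- Matrix of partial derivatives of a map `ℝ^n → ℝ^d`. -/
def gradMat {n d : ℕ} (φ : Euc n → Euc d) (x : Euc n) : Mat d n :=
  fun i j => fderiv ℝ φ x (EuclideanSpace.single j 1) i

/-- Quasiconvexity of `g : ℝ^{d×n} → ℝ`. -/
def QuasiconvexFn {d n : ℕ} (g : Mat d n → ℝ) : Prop :=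
  ∀ ξ : Mat d n, ∀ φ : Euc n → Euc d, ContDiff ℝ (⊤ : ℕ∞) φ → tsupport φ ⊆ unitCube n →
    g ξ ≤ ∫ x in unitCube n, g (fun i j => ξ i j + gradMat φ x i j)

/-- The quasiconvex envelope: the greatest quasiconvex function below `g`. -/
def qcEnvelope {d n : ℕ} (g : Mat d n → ℝ) (ξ : Mat d n) : ℝ :=
  sSup {t : ℝ | ∃ h : Mat d n → ℝ, QuasiconvexFn h ∧ (∀ η, h η ≤ g η) ∧ t = h ξ}

/-- The modular `∫_Ω f(x)^{p(x)} dx`, valued in `ℝ≥0∞`. -/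
def emod {n : ℕ} (Ω : Set (Euc n)) (p : Euc n → ℝ) (f : Euc n → ℝ) : ℝ≥0∞ :=
  ∫⁻ x in Ω, ENNReal.ofReal (f x ^ p x)

/-- Convergence `p_k → p₀` in `L^∞(Ω)`. -/
def TendstoLinf {n : ℕ} (Ω : Set (Euc n)) (p : ℕ → Euc n → ℝ) (p₀ : Euc n → ℝ) : Prop :=
  Tendsto (fun k => eLpNorm (fun x => p k x - p₀ x) ⊤ (volume.restrict Ω)) atTop (nhds 0)

/-- Convergence `p_k → p₀` in `L¹(Ω)`. -/
def TendstoL1 {n : ℕ} (Ω : Set (Euc n)) (p : ℕ → Euc n → ℝ) (p₀ : Euc n → ℝ) : Prop :=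
  Tendsto (fun k => ∫⁻ x in Ω, ENNReal.ofReal |p k x - p₀ x|) atTop (nhds 0)

/-- Strong `L¹(Ω;ℝ^d)` convergence of vector valued maps. -/
def TendstoL1V {n d : ℕ} (Ω : Set (Euc n)) (v : ℕ → Euc n → Euc d) (v₀ : Euc n → Euc d) : Prop :=
  Tendsto (fun k => ∫⁻ x in Ω, ENNReal.ofReal ‖v k x - v₀ x‖) atTop (nhds 0)

/-- Weak `L¹(Ω;ℝ^d)` convergence (testing against bounded measurable functions). -/
def WeakL1Tendsto {n d : ℕ} (Ω : Set (Euc n)) (v : ℕ → Euc n → Euc d) (v₀ : Euc n → Euc d) : Prop :=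
  ∀ g : Euc n → ℝ, Measurable g → (∃ M, ∀ x, |g x| ≤ M) →
    ∀ i : Fin d, Tendsto (fun k => ∫ x in Ω, g x * v k x i) atTop (nhds (∫ x in Ω, g x * v₀ x i))

/-- Weak `L^r(A)` convergence of scalar functions (testing against `L^{r'}` functions). -/
def WeakLrTendsto {n : ℕ} (A : Set (Euc n)) (r : ℝ) (F : ℕ → Euc n → ℝ) (F₀ : Euc n → ℝ) : Prop :=
  ∀ g : Euc n → ℝ, Measurable g → (∫⁻ x in A, ENNReal.ofReal (|g x| ^ (r / (r - 1)))) < ⊤ →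
    Tendsto (fun k => ∫ x in A, g x * F k x) atTop (nhds (∫ x in A, g x * F₀ x))

/-- The class `𝒫_b(Ω)`: measurable exponents with `1 < p⁻ ≤ p⁺ < ∞`. -/
def IsPb {n : ℕ} (Ω : Set (Euc n)) (p : Euc n → ℝ) : Prop :=
  Measurable p ∧ ∃ pm pM : ℝ, 1 < pm ∧ ∀ᵐ x ∂(volume.restrict Ω), pm ≤ p x ∧ p x ≤ pM

/-- log-Hölder continuity on `A`. -/
def LogHolder {n : ℕ} (A : Set (Euc n)) (p : Euc n → ℝ) : Prop :=
  ∃ γ > 0, ∀ x ∈ A, ∀ y ∈ A, 0 < dist x y → dist x y < 1/2 →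
    |p x - p y| ≤ γ / |Real.log (dist x y)|

/-- The class `𝒫_b^{log}(A)`. -/
def IsPbLog {n : ℕ} (A : Set (Euc n)) (p : Euc n → ℝ) : Prop := IsPb A p ∧ LogHolder A p

/-- `p₀ ∈ L^∞(Ω)`. -/
def MemLinf {n : ℕ} (Ω : Set (Euc n)) (p : Euc n → ℝ) : Prop :=
  Measurable p ∧ ∃ M : ℝ, ∀ᵐ x ∂(volume.restrict Ω), |p x| ≤ M

/-- Update the `i`-th coordinate of a point of `ℝ^n`. -/
def updCoord {n : ℕ} (y : Euc n) (i : Fin n) (t : ℝ) : Euc n :=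
  (WithLp.equiv 2 _).symm (Function.update ((WithLp.equiv 2 _) y) i t)

/-- `s` has Lipschitz boundary: near every boundary point, in suitable orthonormal
coordinates, `s` is the open region above the graph of a Lipschitz function. -/
def HasLipschitzBoundary {n : ℕ} (s : Set (Euc n)) : Prop :=
  ∀ x ∈ frontier s, ∃ U : Set (Euc n), IsOpen U ∧ x ∈ U ∧
    ∃ (e : Euc n ≃ₗᵢ[ℝ] Euc n) (i₀ : Fin n) (f : Euc n → ℝ) (K : NNReal),
      LipschitzWith K f ∧ (∀ y t, f (updCoord y i₀ t) = f y) ∧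
      s ∩ U = {y ∈ U | f (e y) < e y i₀}

/-- `A` compactly contained in `Ω`. -/
def CompactlyIn {n : ℕ} (A Ω : Set (Euc n)) : Prop :=
  IsOpen A ∧ IsCompact (closure A) ∧ closure A ⊆ Ω

/-- Weak `L¹(Ω)` convergence of scalar functions. -/
def WeakL1TendstoS {n : ℕ} (Ω : Set (Euc n)) (F : ℕ → Euc n → ℝ) (F₀ : Euc n → ℝ) : Prop :=
  ∀ g : Euc n → ℝ, Measurable g → (∃ M, ∀ x, |g x| ≤ M) →
    Tendsto (fun k => ∫ x in Ω, g x * F k x) atTop (nhds (∫ x in Ω, g x * F₀ x))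

/-- Strong (modular) convergence in the variable exponent space `L^{q(·)}(Ω;ℝ^d)`. -/
def TendstoModular {n d : ℕ} (Ω : Set (Euc n)) (q : Euc n → ℝ)
    (us : ℕ → Euc n → Euc d) (u : Euc n → Euc d) : Prop :=
  Tendsto (fun k => ∫⁻ x in Ω, ENNReal.ofReal (‖us k x - u x‖ ^ q x)) atTop (nhds 0)

/-! ### Lower semicontinuity in abstract form -/

/-- The tangent line inequality for `s ↦ s ^ p` on `[0, ∞)`, in a form that survives `t = 0`. -/
lemma rpow_tangent_le {s t p : ℝ} (hs : 0 ≤ s) (ht : 0 ≤ t) (hp : 1 ≤ p) :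
    t ^ p + p * t ^ (p - 1) * (s - t) ≤ s ^ p := by
  rcases ht.eq_or_lt with rfl | ht
  · rw [Real.zero_rpow (by linarith)]
    rcases hp.eq_or_lt with rfl | hp
    · simp
    · rw [Real.zero_rpow (by linarith)]
      simpa using Real.rpow_nonneg hs p
  · have h := one_add_mul_self_le_rpow_one_add (s := s / t - 1)
      (by linarith [div_nonneg hs ht.le]) hp
    have h2 := mul_le_mul_of_nonneg_left h (Real.rpow_nonneg ht.le p)
    rw [add_sub_cancel, Real.div_rpow hs ht.le,
      mul_div_cancel₀ _ (Real.rpow_pos_of_pos ht p).ne'] at h2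
    refine le_trans (le_of_eq ?_) h2
    have h3 : t ^ p = t ^ (p - 1) * t := by
      rw [← Real.rpow_add_one ht.ne']; ring_nf
    rw [h3]
    field_simp

/-- A bound for `∫⁻ f` off sets of arbitrarily small measure is a bound for the whole integral:
choose the sets with summable measures and combine Borel-Cantelli with Fatou's lemma. -/
lemma lintegral_le_of_small_compl {α : Type*} [MeasurableSpace α] {μ : Measure α}
    {f : α → ℝ≥0∞} (hf : Measurable f) {L : ℝ≥0∞}
    (h : ∀ δ : ℝ, 0 < δ → ∃ F, MeasurableSet F ∧ μ F ≤ ENNReal.ofReal δ ∧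
      ∫⁻ x in Fᶜ, f x ∂μ ≤ L) : ∫⁻ x, f x ∂μ ≤ L := by
  choose F hFm hF hFL using fun n : ℕ => h ((1 / 2) ^ n) (by positivity)
  have hsum : ∑' n, μ (F n) ≠ ⊤ := by
    refine ne_top_of_le_ne_top ?_ (ENNReal.tsum_le_tsum hF)
    rw [← ENNReal.ofReal_tsum_of_nonneg (fun n => by positivity) summable_geometric_two]
    exact ENNReal.ofReal_ne_top
  calc ∫⁻ x, f x ∂μ ≤ ∫⁻ x, liminf (fun n => (F n)ᶜ.indicator f x) atTop ∂μ := by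
        refine lintegral_mono_ae ?_
        filter_upwards [ae_eventually_notMem hsum] with x hx
        refine le_liminf_of_le (by isBoundedDefault) ?_
        filter_upwards [hx] with n hn
        rw [indicator_of_mem (by exact hn)]
    _ ≤ liminf (fun n => ∫⁻ x, (F n)ᶜ.indicator f x ∂μ) atTop :=
        lintegral_liminf_le (fun n => hf.indicator (hFm n).compl)
    _ ≤ L := by
        refine liminf_le_of_le (by isBoundedDefault) fun b hb => ?_
        obtain ⟨n, hn⟩ := hb.exists
        refine hn.trans ?_
        rw [lintegral_indicator (hFm n).compl]
        exact hFL n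

/-- If `a + g ≤ b` pointwise with `g` integrable, then `∫⁻ a ≤ ∫⁻ b + |∫ g|`. -/
lemma lintegral_le_add_abs_integral {α : Type*} [MeasurableSpace α] {μ : Measure α}
    {a b g : α → ℝ} (ha : Measurable a) (ha0 : ∀ x, 0 ≤ a x)
    (hb0 : ∀ x, 0 ≤ b x) (hg : Integrable g μ) (h : ∀ x, a x + g x ≤ b x) :
    ∫⁻ x, ENNReal.ofReal (a x) ∂μ ≤
      ∫⁻ x, ENNReal.ofReal (b x) ∂μ + ENNReal.ofReal |∫ x, g x ∂μ| := by
  have hpos : ∫⁻ x, ENNReal.ofReal (g x) ∂μ ≠ ⊤ :=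
    (lt_of_le_of_lt (lintegral_mono fun x => Real.ofReal_le_enorm (g x)) hg.2).ne
  have hneg : ∫⁻ x, ENNReal.ofReal (-g x) ∂μ ≠ ⊤ := by
    refine (lt_of_le_of_lt (lintegral_mono fun x => Real.ofReal_le_enorm (-g x)) ?_).ne
    exact hg.neg.2
  have hm : AEMeasurable (fun x => ENNReal.ofReal (-g x)) μ :=
    hg.neg.aestronglyMeasurable.aemeasurable.ennreal_ofReal
  have h1 : ∫⁻ x, ENNReal.ofReal (a x) ∂μ + ∫⁻ x, ENNReal.ofReal (g x) ∂μ ≤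
      ∫⁻ x, ENNReal.ofReal (b x) ∂μ + ∫⁻ x, ENNReal.ofReal (-g x) ∂μ := by
    rw [← lintegral_add_left ha.ennreal_ofReal,
      ← lintegral_add_right' _ hm]
    refine lintegral_mono fun x => ?_
    rcases le_total 0 (g x) with h0 | h0
    · rw [← ENNReal.ofReal_add (ha0 x) h0]
      exact (ENNReal.ofReal_le_ofReal (h x)).trans le_self_add
    · change _ ≤ ENNReal.ofReal (b x) + ENNReal.ofReal (-g x)
      rw [ENNReal.ofReal_of_nonpos h0, add_zero,
        ← ENNReal.ofReal_add (hb0 x) (by linarith)]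
      exact ENNReal.ofReal_le_ofReal (by linarith [h x])
  have h2 : ∫⁻ x, ENNReal.ofReal (-g x) ∂μ ≤
      ∫⁻ x, ENNReal.ofReal (g x) ∂μ + ENNReal.ofReal |∫ x, g x ∂μ| := by
    rw [integral_eq_lintegral_pos_part_sub_lintegral_neg_part hg]
    rw [← ENNReal.ofReal_toReal hneg, ← ENNReal.ofReal_toReal hpos,
      ← ENNReal.ofReal_add ENNReal.toReal_nonneg (abs_nonneg _)]
    refine ENNReal.ofReal_le_ofReal ?_
    rw [ENNReal.ofReal_toReal hneg, ENNReal.ofReal_toReal hpos]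
    linarith [neg_abs_le ((∫⁻ x, ENNReal.ofReal (g x) ∂μ).toReal -
      (∫⁻ x, ENNReal.ofReal (-g x) ∂μ).toReal)]
  refine ENNReal.le_of_add_le_add_right hpos (h1.trans ?_)
  calc _ ≤ ∫⁻ x, ENNReal.ofReal (b x) ∂μ +
      (∫⁻ x, ENNReal.ofReal (g x) ∂μ + ENNReal.ofReal |∫ x, g x ∂μ|) := by gcongr
    _ = _ := by ring

/-- Lower semicontinuity in abstract form: `t` is the size of the limit gradient, `S k` that of
the `k`-th one, and `D k` is the component of their difference along the limit gradient. By
Egorov's theorem the slopes `P k * t ^ (P k - 1)` of the tangent lines converge uniformly off a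
small set, so that the linear terms there tend to zero. -/
lemma lintegral_rpow_le_of_weak {α : Type*} [MeasurableSpace α] {μ : Measure α}
    [IsFiniteMeasure μ] {P : ℕ → α → ℝ} {P0 : α → ℝ} (hP : ∀ k, Measurable (P k))
    (hP0 : Measurable P0) (hP1 : ∀ k x, 1 ≤ P k x) (hP01 : ∀ x, 1 ≤ P0 x)
    (hae : ∀ᵐ x ∂μ, Tendsto (fun k => P k x) atTop (𝓝 (P0 x)))
    {t : α → ℝ} (ht : Measurable t) (ht0 : ∀ x, 0 ≤ t x)
    {S D : ℕ → α → ℝ} (hD : ∀ k, Integrable (D k) μ) (hS0 : ∀ k x, 0 ≤ S k x)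
    (hS : ∀ k x, t x + D k x ≤ S k x) {C : ℝ≥0∞} (hC : C ≠ ⊤)
    (hDC : ∀ k, ∫⁻ x, ‖D k x‖ₑ ∂μ ≤ C)
    (hw : ∀ g : α → ℝ, Measurable g → (∃ M, ∀ x, |g x| ≤ M) →
      Tendsto (fun k => ∫ x, g x * D k x ∂μ) atTop (𝓝 0))
    {L : ℝ≥0∞} (hL : ∀ k, ∫⁻ x, ENNReal.ofReal (S k x ^ P k x) ∂μ ≤ L) :
    ∫⁻ x, ENNReal.ofReal (t x ^ P0 x) ∂μ ≤ L := by
  set c : ℕ → α → ℝ := fun k x => P k x * t x ^ (P k x - 1) with hc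
  set c0 : α → ℝ := fun x => P0 x * t x ^ (P0 x - 1) with hc0
  have hcm : ∀ k, Measurable (c k) := fun k => (hP k).mul (ht.pow ((hP k).sub_const 1))
  have hc0m : Measurable c0 := hP0.mul (ht.pow (hP0.sub_const 1))
  have hcnn : ∀ k x, 0 ≤ c k x := fun k x =>
    mul_nonneg (by linarith [hP1 k x]) (Real.rpow_nonneg (ht0 x) _)
  have hc0nn : ∀ x, 0 ≤ c0 x := fun x =>
    mul_nonneg (by linarith [hP01 x]) (Real.rpow_nonneg (ht0 x) _)
  -- `r ↦ 0 ^ r` is discontinuous at `r = 0`, so the slopes need not converge where `t` vanishes;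
  -- such points contribute nothing to the left-hand side.
  set T : Set α := {x | t x ≠ 0} with hT
  have hTm : MeasurableSet T := (ht (measurableSet_singleton 0)).compl
  have hcae : ∀ᵐ x ∂μ, Tendsto (fun k => T.indicator (c k) x) atTop
      (𝓝 (T.indicator c0 x)) := by
    filter_upwards [hae] with x hx
    by_cases hxT : x ∈ T
    · simp only [indicator_of_mem hxT, hc, hc0]
      exact hx.mul ((Real.continuousAt_const_rpow hxT).tendsto.comp (hx.sub_const 1))
    · simp [indicator_of_notMem hxT]
  refine lintegral_le_of_small_compl (ht.pow hP0).ennreal_ofReal fun δ hδ => ?_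
  obtain ⟨F, hFm, hFδ, hFu⟩ := tendstoUniformlyOn_of_ae_tendsto'
    (fun k => ((hcm k).indicator hTm).stronglyMeasurable)
    (hc0m.indicator hTm).stronglyMeasurable hcae (half_pos hδ)
  have hsmall : ∃ M : ℕ, μ {x | (M : ℝ) < c0 x} ≤ ENNReal.ofReal (δ / 2) := by
    have h1 : Tendsto (fun M : ℕ => μ {x | (M : ℝ) < c0 x}) atTop
        (𝓝 (μ (⋂ M : ℕ, {x | (M : ℝ) < c0 x}))) := by
      refine tendsto_measure_iInter_atTop
        (fun M => (measurableSet_lt measurable_const hc0m).nullMeasurableSet) ?_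
        ⟨0, measure_ne_top _ _⟩
      intro a b hab x (hx : (b : ℝ) < c0 x)
      exact lt_of_le_of_lt (by exact_mod_cast hab) hx
    have h2 : (⋂ M : ℕ, {x | (M : ℝ) < c0 x}) = ∅ := by
      ext x
      simp only [mem_iInter, mem_ofPred_eq, mem_empty_iff_false, iff_false, not_forall, not_lt]
      exact exists_nat_ge (c0 x)
    rw [h2, measure_empty] at h1
    obtain ⟨M, hM⟩ := (h1.eventually_le_const
      (ENNReal.ofReal_pos.2 (half_pos hδ))).exists
    exact ⟨M, hM⟩
  obtain ⟨M, hM⟩ := hsmall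
  refine ⟨F ∪ {x | (M : ℝ) < c0 x}, hFm.union (measurableSet_lt measurable_const hc0m), ?_, ?_⟩
  · refine (measure_union_le _ _).trans ((add_le_add hFδ hM).trans ?_)
    rw [← ENNReal.ofReal_add (half_pos hδ).le (half_pos hδ).le, add_halves]
  set E : Set α := (F ∪ {x | (M : ℝ) < c0 x})ᶜ with hE
  have hEm : MeasurableSet E := (hFm.union (measurableSet_lt measurable_const hc0m)).compl
  have hEF : ∀ x ∈ E, x ∈ Fᶜ := fun x hx h => hx (Or.inl h)
  have hEM : ∀ x ∈ E, c0 x ≤ M := fun x hx => not_lt.1 fun h => hx (Or.inr h)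
  set ET := E ∩ T with hET
  have hETm : MeasurableSet ET := hEm.inter hTm
  -- On `ET` the limit slope is bounded by `M`, hence an admissible test function, and the slopes
  -- converge uniformly; so the linear terms tend to zero.
  have hlin : ∀ ε : ℝ, 0 < ε → ∀ᶠ k in atTop,
      Integrable (fun x => ET.indicator (c k) x * D k x) μ ∧
        |∫ x, ET.indicator (c k) x * D k x ∂μ| ≤ ε * C.toReal + ε := by
    intro ε hε
    have hu := Metric.tendstoUniformlyOn_iff.1 hFu ε hε
    have hw0 := hw (ET.indicator c0) (hc0m.indicator hETm) ⟨M, fun x => by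
      by_cases hx : x ∈ ET
      · rw [indicator_of_mem hx, abs_of_nonneg (hc0nn x)]; exact hEM x hx.1
      · simp [indicator_of_notMem hx]⟩
    have hw1 := Metric.tendsto_nhds.1 hw0 ε hε
    filter_upwards [hu, hw1] with k hk hk1
    have hdiff : ∀ x, |ET.indicator (c k) x - ET.indicator c0 x| ≤ ε := by
      intro x
      by_cases hx : x ∈ ET
      · have := hk x (hEF x hx.1)
        rw [indicator_of_mem hx.2, indicator_of_mem hx.2, dist_comm, Real.dist_eq] at this
        rw [indicator_of_mem hx, indicator_of_mem hx]
        exact this.le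
      · simp [indicator_of_notMem hx, hε.le]
    have hi1 : Integrable (fun x => (ET.indicator (c k) x - ET.indicator c0 x) * D k x) μ :=
      (hD k).bdd_mul (c := ε) (((hcm k).indicator hETm).sub
        (hc0m.indicator hETm)).aestronglyMeasurable (Eventually.of_forall hdiff)
    have hi2 : Integrable (fun x => ET.indicator c0 x * D k x) μ := by
      refine (hD k).bdd_mul (c := M) (hc0m.indicator hETm).aestronglyMeasurable
        (Eventually.of_forall fun x => ?_)
      by_cases hx : x ∈ ET
      · rw [indicator_of_mem hx, Real.norm_of_nonneg (hc0nn x)]; exact hEM x hx.1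
      · simp [indicator_of_notMem hx]
    have hsplit : (fun x => ET.indicator (c k) x * D k x) = fun x =>
        (ET.indicator (c k) x - ET.indicator c0 x) * D k x + ET.indicator c0 x * D k x := by
      ext x; ring
    rw [hsplit]
    refine ⟨hi1.add hi2, ?_⟩
    rw [integral_add hi1 hi2]
    refine (abs_add_le _ _).trans (add_le_add ?_ ?_)
    · calc |∫ x, (ET.indicator (c k) x - ET.indicator c0 x) * D k x ∂μ|
          ≤ ∫ x, ε * ‖D k x‖ ∂μ := by
            rw [← Real.norm_eq_abs]
            refine norm_integral_le_of_norm_le ((hD k).norm.const_mul ε)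
              (Eventually.of_forall fun x => ?_)
            rw [norm_mul]
            exact mul_le_mul_of_nonneg_right (hdiff x) (norm_nonneg _)
        _ = ε * ∫ x, ‖D k x‖ ∂μ := integral_const_mul _ _
        _ ≤ ε * C.toReal := by
            refine mul_le_mul_of_nonneg_left ?_ hε.le
            rw [integral_norm_eq_lintegral_enorm (hD k).1]
            exact ENNReal.toReal_mono hC (hDC k)
    · rw [Real.dist_eq, sub_zero] at hk1
      exact hk1.le
  have hint : ∀ ε : ℝ, 0 < ε → ∀ᶠ k in atTop,
      ∫⁻ x, ENNReal.ofReal (ET.indicator (fun x => t x ^ P k x) x) ∂μ ≤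
        L + ENNReal.ofReal (ε * C.toReal + ε) := by
    intro ε hε
    filter_upwards [hlin ε hε] with k hk
    refine (lintegral_le_add_abs_integral (b := fun x => S k x ^ P k x)
      ((ht.pow (hP k)).indicator hETm)
      (fun x => indicator_nonneg (fun x _ => Real.rpow_nonneg (ht0 x) _) x)
      (fun x => Real.rpow_nonneg (hS0 k x) _) hk.1 fun x => ?_).trans
      (add_le_add (hL k) (ENNReal.ofReal_le_ofReal hk.2))
    by_cases hx : x ∈ ET
    · rw [indicator_of_mem hx, indicator_of_mem hx]
      refine le_trans ?_ (rpow_tangent_le (hS0 k x) (ht0 x) (hP1 k x))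
      have : c k x * D k x ≤ c k x * (S k x - t x) :=
        mul_le_mul_of_nonneg_left (by linarith [hS k x]) (hcnn k x)
      linarith
    · rw [indicator_of_notMem hx, indicator_of_notMem hx]
      simpa using Real.rpow_nonneg (hS0 k x) _
  have hfatou : ∫⁻ x in E, ENNReal.ofReal (t x ^ P0 x) ∂μ ≤
      liminf (fun k => ∫⁻ x, ENNReal.ofReal (ET.indicator (fun x => t x ^ P k x) x) ∂μ)
        atTop := by
    rw [← lintegral_indicator hEm]
    refine le_trans (lintegral_mono_ae ?_) (lintegral_liminf_le fun k =>
      ((ht.pow (hP k)).indicator hETm).ennreal_ofReal)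
    filter_upwards [hae] with x hx
    by_cases hxE : x ∈ E
    · rw [indicator_of_mem hxE]
      by_cases hxT : x ∈ T
      · simp only [indicator_of_mem (show x ∈ ET from ⟨hxE, hxT⟩)]
        refine le_of_eq (Tendsto.liminf_eq ?_).symm
        exact (ENNReal.continuous_ofReal.tendsto _).comp
          ((Real.continuousAt_const_rpow hxT).tendsto.comp hx)
      · have h0 : t x = 0 := not_not.1 hxT
        rw [h0, Real.zero_rpow (by linarith [hP01 x])]
        simp
    · rw [indicator_of_notMem hxE]; exact zero_le
  have hfin : ∀ ε : ℝ, 0 < ε → ∫⁻ x in E, ENNReal.ofReal (t x ^ P0 x) ∂μ ≤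
      L + ENNReal.ofReal (ε * C.toReal + ε) := fun ε hε =>
    hfatou.trans (liminf_le_of_frequently_le' (hint ε hε).frequently)
  refine ge_of_tendsto (x := 𝓝[>] (0 : ℝ))
    (f := fun ε : ℝ => L + ENNReal.ofReal (ε * C.toReal + ε)) ?_
    (eventually_mem_nhdsWithin.mono hfin)
  have h0 : Tendsto (fun ε : ℝ => L + ENNReal.ofReal (ε * C.toReal + ε)) (𝓝 0)
      (𝓝 (L + ENNReal.ofReal (0 * C.toReal + 0))) := by
    refine Tendsto.const_add _ ((ENNReal.continuous_ofReal.tendsto _).comp ?_)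
    exact Continuous.tendsto (by fun_prop) 0
  simpa using h0.mono_left nhdsWithin_le_nhds

/-! ### Lower semicontinuity of the modular of the gradient -/

lemma mnorm_nonneg {d n : ℕ} (ξ : Mat d n) : 0 ≤ mnorm ξ := Real.sqrt_nonneg _

lemma mnorm_sq {d n : ℕ} (ξ : Mat d n) : mnorm ξ ^ 2 = ∑ i, ∑ j, (ξ i j) ^ 2 :=
  Real.sq_sqrt (Finset.sum_nonneg fun _ _ => Finset.sum_nonneg fun _ _ => sq_nonneg _)

lemma abs_le_mnorm {d n : ℕ} (ξ : Mat d n) (i : Fin d) (j : Fin n) : |ξ i j| ≤ mnorm ξ := by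
  refine Real.abs_le_sqrt ?_
  refine le_trans ?_ (Finset.single_le_sum (f := fun i => ∑ j, (ξ i j) ^ 2)
    (fun _ _ => Finset.sum_nonneg fun _ _ => sq_nonneg _) (Finset.mem_univ i))
  exact Finset.single_le_sum (f := fun j => (ξ i j) ^ 2) (fun _ _ => sq_nonneg _)
    (Finset.mem_univ j)

lemma sum_mul_le_mnorm {d n : ℕ} (η ξ : Mat d n) :
    ∑ i, ∑ j, η i j * ξ i j ≤ mnorm η * mnorm ξ := by
  have h := Real.sum_mul_le_sqrt_mul_sqrt (Finset.univ : Finset (Fin d × Fin n))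
    (fun a => η a.1 a.2) (fun a => ξ a.1 a.2)
  simpa only [mnorm, Fintype.sum_prod_type] using h

lemma sum_div_mnorm_mul_self {d n : ℕ} (η : Mat d n) :
    ∑ i, ∑ j, η i j / mnorm η * η i j = mnorm η := by
  have h : ∑ i, ∑ j, η i j / mnorm η * η i j = mnorm η ^ 2 / mnorm η := by
    rw [mnorm_sq, Finset.sum_div]
    refine Finset.sum_congr rfl fun i _ => ?_
    rw [Finset.sum_div]
    exact Finset.sum_congr rfl fun j _ => by ring
  rw [h, sq, mul_self_div_self]

lemma sum_div_mnorm_mul_le {d n : ℕ} (η ξ : Mat d n) :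
    ∑ i, ∑ j, η i j / mnorm η * ξ i j ≤ mnorm ξ := by
  have h : ∑ i, ∑ j, η i j / mnorm η * ξ i j = (∑ i, ∑ j, η i j * ξ i j) / mnorm η := by
    rw [Finset.sum_div]
    refine Finset.sum_congr rfl fun i _ => ?_
    rw [Finset.sum_div]
    exact Finset.sum_congr rfl fun j _ => by ring
  rw [h]
  refine div_le_of_le_mul₀ (mnorm_nonneg _) (mnorm_nonneg _) ?_
  rw [mul_comm]
  exact sum_mul_le_mnorm η ξ

lemma abs_div_mnorm_le_one {d n : ℕ} (η : Mat d n) (i : Fin d) (j : Fin n) :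
    |η i j / mnorm η| ≤ 1 := by
  rw [abs_div, abs_of_nonneg (mnorm_nonneg η)]
  exact div_le_one_of_le₀ (abs_le_mnorm η i j) (mnorm_nonneg η)

lemma measurable_mnorm {d n : ℕ} : Measurable (mnorm (d := d) (n := n)) := by
  unfold mnorm
  fun_prop

lemma le_one_add_rpow {s p : ℝ} (hs : 0 ≤ s) (hp : 1 ≤ p) : s ≤ 1 + s ^ p := by
  rcases le_total s 1 with h | h
  · linarith [Real.rpow_nonneg hs p]
  · linarith [Real.self_le_rpow_of_one_le h hp]

/-- Lower semicontinuity on a set of finite measure, along a sequence whose exponents converge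
almost everywhere. The bound on the modulars, with `p k ≥ 1`, gives the `L¹` bound on the
gradients. -/
lemma emod_le_of_weak {N d : ℕ} {A : Set (Euc N)} (hAfin : volume A ≠ ⊤)
    {p : ℕ → Euc N → ℝ} {p₀ : Euc N → ℝ} (hp : ∀ k, Measurable (p k)) (hp₀ : Measurable p₀)
    (hp1 : ∀ k x, 1 ≤ p k x) (hp₀1 : ∀ x, 1 ≤ p₀ x)
    (hae : ∀ᵐ x ∂(volume.restrict A), Tendsto (fun k => p k x) atTop (𝓝 (p₀ x)))
    {G : ℕ → Euc N → Mat d N} {G₀ : Euc N → Mat d N}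
    (hG : ∀ k i j, IntegrableOn (fun x => G k x i j) A)
    (hG₀ : ∀ i j, IntegrableOn (fun x => G₀ x i j) A)
    (hw : ∀ i j, WeakL1TendstoS A (fun k x => G k x i j) (fun x => G₀ x i j))
    {L : ℝ≥0∞} (hLt : L ≠ ⊤) (hL : ∀ k, emod A (p k) (fun x => mnorm (G k x)) ≤ L) :
    emod A p₀ (fun x => mnorm (G₀ x)) ≤ L := by
  have : IsFiniteMeasure (volume.restrict A) := ⟨by simpa using hAfin.lt_top⟩
  set μ := volume.restrict A with hμ
  let G' : Euc N → Mat d N := fun x i j => (hG₀ i j).1.mk _ x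
  have hG'm : ∀ i j, Measurable fun x => G' x i j := fun i j =>
    (hG₀ i j).1.stronglyMeasurable_mk.measurable
  have hG'ae1 : ∀ i j, (fun x => G₀ x i j) =ᵐ[μ] fun x => G' x i j := fun i j =>
    (hG₀ i j).1.ae_eq_mk
  have hG'i : ∀ i j, Integrable (fun x => G' x i j) μ := fun i j =>
    Integrable.congr (hG₀ i j) (hG'ae1 i j)
  have hG'ae : ∀ᵐ x ∂μ, G₀ x = G' x := by
    have : ∀ᵐ x ∂μ, ∀ i j, G₀ x i j = G' x i j := by
      rw [ae_all_iff]; intro i; rw [ae_all_iff]; exact hG'ae1 i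
    filter_upwards [this] with x hx
    ext i j; exact hx i j
  have hGmeas : Measurable G' := by
    refine measurable_pi_iff.2 fun i => measurable_pi_iff.2 fun j => hG'm i j
  have htm : Measurable fun x => mnorm (G' x) := measurable_mnorm.comp hGmeas
  -- `ν` is the direction of the limit gradient (zero where the gradient vanishes). It is a bounded
  -- test field, so the weak convergence of the gradients passes to `D`.
  let ν : Fin d → Fin N → Euc N → ℝ := fun i j x => G' x i j / mnorm (G' x)
  have hνm : ∀ i j, Measurable (ν i j) := fun i j => (hG'm i j).div htm
  have hν1 : ∀ i j x, |ν i j x| ≤ 1 := fun i j x => abs_div_mnorm_le_one (G' x) i j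
  let D : ℕ → Euc N → ℝ := fun k x => ∑ i, ∑ j, ν i j x * (G k x i j - G' x i j)
  have hsub : ∀ k i j, Integrable (fun x => G k x i j - G' x i j) μ := fun k i j =>
    Integrable.sub (hG k i j) (hG'i i j)
  have hterm : ∀ k i j, Integrable (fun x => ν i j x * (G k x i j - G' x i j)) μ :=
    fun k i j => (hsub k i j).bdd_mul (c := 1) (hνm i j).aestronglyMeasurable
      (Eventually.of_forall (hν1 i j))
  have hDi : ∀ k, Integrable (D k) μ := fun k =>
    integrable_finsetSum _ fun i _ => integrable_finsetSum _ fun j _ => hterm k i j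
  have hGL : ∀ k i j, ∫⁻ x, ‖G k x i j‖ₑ ∂μ ≤ μ univ + L := by
    intro k i j
    calc ∫⁻ x, ‖G k x i j‖ₑ ∂μ
        ≤ ∫⁻ x, (1 + ENNReal.ofReal (mnorm (G k x) ^ p k x)) ∂μ := by
          refine lintegral_mono fun x => ?_
          rw [← ENNReal.ofReal_one, ← ENNReal.ofReal_add zero_le_one
            (Real.rpow_nonneg (mnorm_nonneg _) _), Real.enorm_eq_ofReal_abs]
          exact ENNReal.ofReal_le_ofReal ((abs_le_mnorm _ i j).trans
            (le_one_add_rpow (mnorm_nonneg _) (hp1 k x)))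
      _ = μ univ + emod A (p k) (fun x => mnorm (G k x)) := by
          rw [lintegral_add_left measurable_const]
          simp [emod, hμ]
      _ ≤ μ univ + L := by gcongr; exact hL k
  have key := lintegral_rpow_le_of_weak (μ := μ) (P := p) (P0 := p₀) hp hp₀ hp1 hp₀1 hae
    (t := fun x => mnorm (G' x)) htm (fun x => mnorm_nonneg _)
    (S := fun k x => mnorm (G k x)) (D := D) hDi (fun k x => mnorm_nonneg _)
    (fun k x => ?_) (C := ∑ i : Fin d, ∑ j : Fin N, (μ univ + L + ∫⁻ x, ‖G' x i j‖ₑ ∂μ))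
    ?_ (fun k => ?_) (fun g hg hgb => ?_) (L := L) hL
  · refine le_trans (le_of_eq (lintegral_congr_ae ?_)) key
    filter_upwards [hG'ae] with x hx
    simp only [hx]
  · have : D k x = ∑ i, ∑ j, ν i j x * G k x i j - ∑ i, ∑ j, ν i j x * G' x i j := by
      simp only [D, mul_sub, Finset.sum_sub_distrib]
    rw [this, show ∑ i, ∑ j, ν i j x * G' x i j = mnorm (G' x) from sum_div_mnorm_mul_self _,
      add_sub_cancel]
    exact sum_div_mnorm_mul_le _ _
  · refine ENNReal.sum_ne_top.2 fun i _ => ENNReal.sum_ne_top.2 fun j _ => ?_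
    exact ENNReal.add_ne_top.2 ⟨ENNReal.add_ne_top.2 ⟨measure_ne_top _ _, hLt⟩,
      (hG'i i j).2.ne⟩
  · calc ∫⁻ x, ‖D k x‖ₑ ∂μ
        ≤ ∫⁻ x, ∑ i, ∑ j, (‖G k x i j‖ₑ + ‖G' x i j‖ₑ) ∂μ := by
          refine lintegral_mono fun x => ?_
          refine (enorm_sum_le _ _).trans (Finset.sum_le_sum fun i _ =>
            (enorm_sum_le _ _).trans (Finset.sum_le_sum fun j _ => ?_))
          rw [enorm_mul]
          calc ‖ν i j x‖ₑ * ‖G k x i j - G' x i j‖ₑ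
              ≤ 1 * (‖G k x i j‖ₑ + ‖G' x i j‖ₑ) := by
                gcongr
                · rw [Real.enorm_eq_ofReal_abs, ← ENNReal.ofReal_one]
                  exact ENNReal.ofReal_le_ofReal (hν1 i j x)
                · exact enorm_sub_le
            _ = _ := one_mul _
      _ = ∑ i, ∑ j, (∫⁻ x, ‖G k x i j‖ₑ ∂μ + ∫⁻ x, ‖G' x i j‖ₑ ∂μ) := by
          have hm : ∀ i j, AEMeasurable (fun x => ‖G k x i j‖ₑ + ‖G' x i j‖ₑ) μ := fun i j =>
            (hG k i j).1.enorm.add (hG'm i j).enorm.aemeasurable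
          rw [lintegral_finsetSum' _ fun i _ => Finset.aemeasurable_fun_sum _ fun j _ => hm i j]
          refine Finset.sum_congr rfl fun i _ => ?_
          rw [lintegral_finsetSum' _ fun j _ => hm i j]
          refine Finset.sum_congr rfl fun j _ => ?_
          rw [lintegral_add_right _ (hG'm i j).enorm]
      _ ≤ _ := by
          gcongr with i _ j _
          exact hGL k i j
  · obtain ⟨M, hM⟩ := hgb
    have hgn : ∀ i j x, |g x * ν i j x| ≤ M := fun i j x => by
      rw [abs_mul]
      calc |g x| * |ν i j x| ≤ M * 1 :=
            mul_le_mul (hM x) (hν1 i j x) (abs_nonneg _) ((abs_nonneg _).trans (hM x))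
        _ = M := mul_one M
    have hi : ∀ i j, ∀ f : Euc N → ℝ, Integrable f μ →
        Integrable (fun x => g x * ν i j x * f x) μ := fun i j f hf =>
      hf.bdd_mul (c := M) (hg.mul (hνm i j)).aestronglyMeasurable
        (Eventually.of_forall (hgn i j))
    have h1 : ∀ k, ∫ x, g x * D k x ∂μ = ∑ i, ∑ j, (∫ x, g x * ν i j x * G k x i j ∂μ -
        ∫ x, g x * ν i j x * G₀ x i j ∂μ) := by
      intro k
      have h2 : (fun x => g x * D k x) = fun x =>
          ∑ i, ∑ j, g x * ν i j x * (G k x i j - G' x i j) := by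
        ext x
        simp only [D, Finset.mul_sum, mul_assoc]
      rw [h2, integral_finsetSum _ fun i _ => integrable_finsetSum _ fun j _ =>
        hi i j _ (hsub k i j)]
      refine Finset.sum_congr rfl fun i _ => ?_
      rw [integral_finsetSum _ fun j _ => hi i j _ (hsub k i j)]
      refine Finset.sum_congr rfl fun j _ => ?_
      have h3 : ∫ x, g x * ν i j x * G₀ x i j ∂μ = ∫ x, g x * ν i j x * G' x i j ∂μ := by
        refine integral_congr_ae ?_
        filter_upwards [hG'ae1 i j] with x hx
        rw [hx]
      rw [h3, ← integral_sub (hi i j _ (hG k i j)) (hi i j _ (hG'i i j))]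
      simp only [mul_sub]
    simp only [h1]
    rw [show (0 : ℝ) = ∑ i : Fin d, ∑ j : Fin N, (0 : ℝ) by simp]
    refine tendsto_finsetSum _ fun i _ => tendsto_finsetSum _ fun j _ => ?_
    have h4 := hw i j (fun x => g x * ν i j x) (hg.mul (hνm i j)) ⟨M, hgn i j⟩
    have h5 := h4.sub_const (∫ x, g x * ν i j x * G₀ x i j ∂μ)
    rw [sub_self] at h5
    exact h5

/-- An open set is the increasing union of open sets compactly contained in it. -/
lemma exists_exhaustion {N : ℕ} {Ω : Set (Euc N)} (hΩ : IsOpen Ω) :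
    ∃ A : ℕ → Set (Euc N), (∀ m, CompactlyIn (A m) Ω) ∧ Monotone A ∧ ⋃ m, A m = Ω := by
  have : LocallyCompactSpace Ω := hΩ.locallyCompactSpace
  let K := CompactExhaustion.choice Ω
  have hsub : ∀ m, Subtype.val '' interior (K m) ⊆ Subtype.val '' (K m) := fun m =>
    image_mono interior_subset
  have hKc : ∀ m, IsCompact (Subtype.val '' (K m) : Set (Euc N)) := fun m =>
    (K.isCompact m).image continuous_subtype_val
  have hcl : ∀ m, closure (Subtype.val '' interior (K m) : Set (Euc N)) ⊆
      Subtype.val '' (K m) := fun m => closure_minimal (hsub m) (hKc m).isClosed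
  refine ⟨fun m => Subtype.val '' interior (K m), fun m => ⟨?_, ?_, ?_⟩, ?_, ?_⟩
  · exact hΩ.isOpenMap_subtype_val _ isOpen_interior
  · exact (hKc m).of_isClosed_subset isClosed_closure (hcl m)
  · exact (hcl m).trans (by rintro _ ⟨x, -, rfl⟩; exact x.2)
  · exact fun a b hab => image_mono (interior_mono (K.subset hab))
  · refine Subset.antisymm (iUnion_subset fun m => by rintro _ ⟨x, -, rfl⟩; exact x.2) ?_
    intro x hx
    have : (⟨x, hx⟩ : Ω) ∈ ⋃ m, K m := by rw [K.iUnion_eq]; trivial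
    obtain ⟨m, hm⟩ := mem_iUnion.1 this
    exact mem_iUnion.2 ⟨m + 1, ⟨x, hx⟩, K.subset_interior_succ m hm, rfl⟩

lemma exists_subseq_ae_tendsto {N : ℕ} {Ω : Set (Euc N)} {p : ℕ → Euc N → ℝ} {p₀ : Euc N → ℝ}
    (hp : ∀ k, Measurable (p k)) (hp₀ : Measurable p₀) (h : TendstoL1 Ω p p₀) :
    ∃ ns : ℕ → ℕ, StrictMono ns ∧ ∀ᵐ x ∂(volume.restrict Ω),
      Tendsto (fun i => p (ns i) x) atTop (𝓝 (p₀ x)) := by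
  refine TendstoInMeasure.exists_seq_tendsto_ae (tendstoInMeasure_of_tendsto_eLpNorm
    (p := 1) one_ne_zero (fun n => (hp n).aestronglyMeasurable) hp₀.aestronglyMeasurable ?_)
  refine h.congr fun k => ?_
  rw [eLpNorm_one_eq_lintegral_enorm]
  refine lintegral_congr fun x => ?_
  rw [Pi.sub_apply, Real.enorm_eq_ofReal_abs]

/-- Lower semicontinuity of the modular of the gradient. A subsequence whose modulars stay below
a given number above the lower limit has a further subsequence along which the exponents converge
almost everywhere; the bound is proved on each set of an exhaustion of `Ω`. -/
lemma emod_le_liminf {N d : ℕ} {Ω : Set (Euc N)} (hΩ : IsOpen Ω)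
    {p : ℕ → Euc N → ℝ} (hp : ∀ k, Measurable (p k)) (hp1 : ∀ k, ∀ x, 1 ≤ p k x)
    {p₀ : Euc N → ℝ} (hp₀ : Measurable p₀) (hp₀1 : ∀ x, 1 ≤ p₀ x) (hpconv : TendstoL1 Ω p p₀)
    {G : ℕ → Euc N → Mat d N} (hG : ∀ k i j, IntegrableOn (fun x => G k x i j) Ω)
    {G₀ : Euc N → Mat d N}
    (hG₀ : ∀ A, CompactlyIn A Ω → ∀ i j, IntegrableOn (fun x => G₀ x i j) A)
    (hw : ∀ A, CompactlyIn A Ω →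
      ∀ i j, WeakL1TendstoS A (fun k x => G k x i j) (fun x => G₀ x i j)) :
    emod Ω p₀ (fun x => mnorm (G₀ x)) ≤
      liminf (fun k => emod Ω (p k) (fun x => mnorm (G k x))) atTop := by
  by_contra! hlt
  obtain ⟨b, hb1, hb2⟩ := exists_between hlt
  obtain ⟨φ, hφ, hφb⟩ := extraction_of_frequently_atTop (frequently_lt_of_liminf_lt
    (by isBoundedDefault) hb1)
  have hconv' : TendstoL1 Ω (fun k => p (φ k)) p₀ := hpconv.comp hφ.tendsto_atTop
  obtain ⟨ns, hns, hae⟩ := exists_subseq_ae_tendsto (fun k => hp (φ k)) hp₀ hconv'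
  obtain ⟨A, hA, hAmono, hAU⟩ := exists_exhaustion hΩ
  refine absurd hb2 (not_lt.2 ?_)
  have hloc : ∀ m, emod (A m) p₀ (fun x => mnorm (G₀ x)) ≤ b := by
    intro m
    have hAΩ : A m ⊆ Ω := subset_closure.trans (hA m).2.2
    have hfin : volume (A m) ≠ ⊤ :=
      ((measure_mono subset_closure).trans_lt (hA m).2.1.measure_lt_top).ne
    refine emod_le_of_weak hfin (p := fun k => p (φ (ns k))) (G := fun k => G (φ (ns k)))
      (fun k => hp _) hp₀ (fun k => hp1 _) hp₀1 (ae_restrict_of_ae_restrict_of_subset hAΩ hae)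
      (fun k i j => (hG _ i j).mono_set hAΩ) (hG₀ _ (hA m)) (fun i j g hg hgb => ?_)
      hb2.ne_top (fun k => ?_)
    · exact (hw _ (hA m) i j g hg hgb).comp (hφ.tendsto_atTop.comp hns.tendsto_atTop)
    · exact (lintegral_mono_set hAΩ).trans (hφb _).le
  have hU := setLIntegral_iUnion_of_directed (μ := volume)
    (fun x => ENNReal.ofReal (mnorm (G₀ x) ^ p₀ x)) hAmono.directed_le
  rw [hAU] at hU
  rw [emod, hU]
  exact iSup_le hloc

/-- A local weak gradient is a weak gradient on the whole open set. -/
lemma isWeakGrad_of_compactlyIn {N d : ℕ} {Ω : Set (Euc N)} (hΩ : IsOpen Ω)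
    {v : Euc N → Euc d} {G : Euc N → Mat d N}
    (h : ∀ A, CompactlyIn A Ω → IsWeakGrad A v G) : IsWeakGrad Ω v G := by
  intro φ hφ hφc hφΩ i j
  obtain ⟨A, hAo, hKA, hAΩ, hAc⟩ := exists_open_between_and_isCompact_closure hφc hΩ hφΩ
  have hsub : A ⊆ Ω := subset_closure.trans hAΩ
  have hA := h A ⟨hAo, hAc, hAΩ⟩ φ hφ hφc hKA i j
  rw [setIntegral_eq_of_subset_of_forall_sdiff_eq_zero hΩ.measurableSet hsub,
    setIntegral_eq_of_subset_of_forall_sdiff_eq_zero hΩ.measurableSet hsub, hA]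
  · intro x hx
    have : x ∉ tsupport (fderiv ℝ φ) := fun h => hx.2 (hKA (tsupport_fderiv_subset ℝ h))
    simp [image_eq_zero_of_notMem_tsupport this]
  · intro x hx
    have : x ∉ tsupport φ := fun h => hx.2 (hKA h)
    simp [image_eq_zero_of_notMem_tsupport this]

/-! ### Cone averages and the cone potential -/

/-- Jensen's inequality for the power `q` and a measure of arbitrary total mass. -/
lemma lintegral_rpow_le_mul {α : Type*} [MeasurableSpace α] {μ : Measure α} {f : α → ℝ≥0∞}
    (hf : AEMeasurable f μ) {q : ℝ} (hq : 1 ≤ q) :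
    (∫⁻ x, f x ∂μ) ^ q ≤ μ univ ^ (q - 1) * ∫⁻ x, f x ^ q ∂μ := by
  rcases hq.eq_or_lt with rfl | hq
  · simp
  have hq0 : 0 < q := by linarith
  have hH := ENNReal.lintegral_mul_le_Lp_mul_Lq μ (Real.HolderConjugate.conjExponent hq) hf
    (aemeasurable_const (b := (1 : ℝ≥0∞)))
  simp only [Pi.mul_apply, mul_one, ENNReal.one_rpow, lintegral_const, one_mul] at hH
  calc (∫⁻ x, f x ∂μ) ^ q
      ≤ ((∫⁻ x, f x ^ q ∂μ) ^ (1 / q) * μ univ ^ (1 / q.conjExponent)) ^ q :=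
        ENNReal.rpow_le_rpow hH hq0.le
    _ = μ univ ^ (q - 1) * ∫⁻ x, f x ^ q ∂μ := by
        rw [ENNReal.mul_rpow_of_nonneg _ _ hq0.le, ← ENNReal.rpow_mul, ← ENNReal.rpow_mul,
          one_div_mul_cancel hq0.ne', ENNReal.rpow_one, mul_comm]
        congr 2
        rw [Real.conjExponent]
        have : q - 1 ≠ 0 := by linarith
        field_simp

/-- The integral of `g` over the ball `y + τ⁻¹ • closedBall c ρ`, scaled by `τ ^ N`, which makes
it comparable to an average. As `τ` runs through `(1, ∞)` these balls sweep out a cone with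
vertex `y`. -/
def coneAvg {N : ℕ} (c : Euc N) (ρ : ℝ) (g : Euc N → ℝ≥0∞) (τ : ℝ) (y : Euc N) : ℝ≥0∞ :=
  ENNReal.ofReal (τ ^ N) * ∫⁻ x in Metric.closedBall (y + τ⁻¹ • c) (τ⁻¹ * ρ), g x

/-- The measure `τ⁻² dτ` on `(1, ∞)`. The cone potential of `g` at `y` is the integral of
`τ ↦ coneAvg c ρ g τ y` against it; up to constants it is a Riesz potential of order one
restricted to a cone with vertex `y`. -/
def scaleMeasure : Measure ℝ :=
  (volume.restrict (Ioi 1)).withDensity fun τ => ENNReal.ofReal (τ ^ (-2 : ℝ))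

lemma lintegral_scaleMeasure {H : ℝ → ℝ≥0∞} (hH : Measurable H) :
    ∫⁻ τ, H τ ∂scaleMeasure = ∫⁻ τ in Ioi 1, ENNReal.ofReal (τ ^ (-2 : ℝ)) * H τ := by
  rw [scaleMeasure, lintegral_withDensity_eq_lintegral_mul _ (by fun_prop) hH]
  rfl

lemma lintegral_Ioi_rpow_lt_top {a : ℝ} (ha : a < -1) :
    ∫⁻ τ in Ioi (1 : ℝ), ENNReal.ofReal (τ ^ a) < ⊤ := by
  have h := (integrableOn_Ioi_rpow_of_lt ha one_pos).2
  refine lt_of_le_of_lt (lintegral_mono fun τ => ?_) h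
  exact Real.ofReal_le_enorm _

instance : IsFiniteMeasure scaleMeasure := by
  refine ⟨?_⟩
  rw [scaleMeasure, withDensity_apply _ MeasurableSet.univ, Measure.restrict_univ]
  exact lintegral_Ioi_rpow_lt_top (by norm_num)

lemma ae_scaleMeasure {P : ℝ → Prop} (h : ∀ τ, 1 < τ → P τ) : ∀ᵐ τ ∂scaleMeasure, P τ := by
  refine (withDensity_absolutelyContinuous _ _).ae_le ?_
  filter_upwards [ae_restrict_mem measurableSet_Ioi] with τ hτ using h τ hτ

lemma lintegral_scaleMeasure_rpow_lt_top {a : ℝ} (ha : a ≤ 1 / 2) :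
    ∫⁻ τ, ENNReal.ofReal (τ ^ a) ∂scaleMeasure < ⊤ := by
  rw [lintegral_scaleMeasure (by fun_prop)]
  refine lt_of_le_of_lt ?_ (lintegral_Ioi_rpow_lt_top (a := -2 + a) (by linarith))
  refine setLIntegral_mono' measurableSet_Ioi fun τ hτ => ?_
  have hτ0 : (0 : ℝ) < τ := lt_trans one_pos hτ
  rw [← ENNReal.ofReal_mul (Real.rpow_nonneg hτ0.le _), ← Real.rpow_add hτ0]

lemma volume_coneBall {N : ℕ} (c : Euc N) {ρ : ℝ} (hρ : 0 ≤ ρ) {τ : ℝ} (hτ : 0 < τ) (y : Euc N) :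
    ENNReal.ofReal (τ ^ N) * volume (Metric.closedBall (y + τ⁻¹ • c) (τ⁻¹ * ρ)) =
      ENNReal.ofReal (ρ ^ N) * volume (Metric.ball (0 : Euc N) 1) := by
  rw [Measure.addHaar_closedBall _ _ (by positivity), finrank_euclideanSpace, Fintype.card_fin,
    ← mul_assoc, ← ENNReal.ofReal_mul (by positivity), ← mul_pow, mul_inv_cancel_left₀ hτ.ne']

lemma measurable_coneAvg {N : ℕ} (c : Euc N) (ρ : ℝ) {g : Euc N → ℝ≥0∞} (hg : Measurable g) :
    Measurable fun z : Euc N × ℝ => coneAvg c ρ g z.2 z.1 := by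
  have hS : MeasurableSet {w : (Euc N × ℝ) × Euc N |
      dist w.2 (w.1.1 + w.1.2⁻¹ • c) ≤ w.1.2⁻¹ * ρ} :=
    measurableSet_le (by fun_prop) (by fun_prop)
  have hm : Measurable fun z : Euc N × ℝ => ∫⁻ x, {w : (Euc N × ℝ) × Euc N |
      dist w.2 (w.1.1 + w.1.2⁻¹ • c) ≤ w.1.2⁻¹ * ρ}.indicator (fun w => g w.2) (z, x) :=
    Measurable.lintegral_prod_right' ((hg.comp measurable_snd).indicator hS)
  have h1 : Measurable fun z : Euc N × ℝ => ENNReal.ofReal (z.2 ^ N) := by fun_prop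
  convert h1.mul hm using 1
  ext z
  rw [Pi.mul_apply, coneAvg, ← lintegral_indicator Metric.isClosed_closedBall.measurableSet]
  rfl

/-- Jensen's inequality on a single ball of the cone. -/
lemma coneAvg_rpow_le {N : ℕ} (c : Euc N) {ρ : ℝ} (hρ : 0 ≤ ρ) {g : Euc N → ℝ≥0∞}
    (hg : Measurable g) {q : ℝ} (hq : 1 ≤ q) {τ : ℝ} (hτ : 0 < τ) (y : Euc N) :
    coneAvg c ρ g τ y ^ q ≤
      (ENNReal.ofReal (ρ ^ N) * volume (Metric.ball (0 : Euc N) 1)) ^ (q - 1) *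
        coneAvg c ρ (fun x => g x ^ q) τ y := by
  have ha0 : ENNReal.ofReal (τ ^ N) ≠ 0 := (ENNReal.ofReal_pos.2 (by positivity)).ne'
  have h := lintegral_rpow_le_mul
    (μ := volume.restrict (Metric.closedBall (y + τ⁻¹ • c) (τ⁻¹ * ρ))) hg.aemeasurable hq
  rw [Measure.restrict_apply_univ] at h
  rw [← volume_coneBall c hρ hτ y, coneAvg, coneAvg,
    ENNReal.mul_rpow_of_nonneg _ _ (by linarith), ENNReal.mul_rpow_of_nonneg _ _ (by linarith)]
  have hpow : ENNReal.ofReal (τ ^ N) ^ q =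
      ENNReal.ofReal (τ ^ N) ^ (q - 1) * ENNReal.ofReal (τ ^ N) := by
    conv_rhs => rw [← ENNReal.rpow_one (ENNReal.ofReal (τ ^ N)), ← ENNReal.rpow_mul, one_mul]
    rw [← ENNReal.rpow_add _ _ ha0 ENNReal.ofReal_ne_top, sub_add_cancel]
  rw [hpow]
  calc _ ≤ ENNReal.ofReal (τ ^ N) ^ (q - 1) * ENNReal.ofReal (τ ^ N) *
        (volume (Metric.closedBall (y + τ⁻¹ • c) (τ⁻¹ * ρ)) ^ (q - 1) *
          ∫⁻ x in Metric.closedBall (y + τ⁻¹ • c) (τ⁻¹ * ρ), g x ^ q) := by gcongr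
    _ = _ := by ring

/-- By Tonelli, the total mass of the cone averages does not depend on the scale. -/
lemma lintegral_coneAvg {N : ℕ} (c : Euc N) {ρ : ℝ} (hρ : 0 ≤ ρ) {g : Euc N → ℝ≥0∞}
    (hg : Measurable g) {τ : ℝ} (hτ : 0 < τ) :
    ∫⁻ y, coneAvg c ρ g τ y =
      ENNReal.ofReal (ρ ^ N) * volume (Metric.ball (0 : Euc N) 1) * ∫⁻ x, g x := by
  have hmem : ∀ x y : Euc N, x ∈ Metric.closedBall (y + τ⁻¹ • c) (τ⁻¹ * ρ) ↔
      y ∈ Metric.closedBall (x + τ⁻¹ • (-c)) (τ⁻¹ * ρ) := by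
    intro x y
    rw [Metric.mem_closedBall', Metric.mem_closedBall, dist_eq_norm, dist_eq_norm]
    have : y + τ⁻¹ • c - x = y - (x + τ⁻¹ • (-c)) := by rw [smul_neg]; abel
    rw [this]
  have hS : MeasurableSet {w : Euc N × Euc N | dist w.2 (w.1 + τ⁻¹ • c) ≤ τ⁻¹ * ρ} :=
    measurableSet_le (by fun_prop) (by fun_prop)
  have hm : Measurable ({w : Euc N × Euc N | dist w.2 (w.1 + τ⁻¹ • c) ≤ τ⁻¹ * ρ}.indicator
      fun w => ENNReal.ofReal (τ ^ N) * g w.2) :=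
    ((hg.comp measurable_snd).const_mul _).indicator hS
  have h1 : ∀ y, coneAvg c ρ g τ y = ∫⁻ x, {w : Euc N × Euc N |
      dist w.2 (w.1 + τ⁻¹ • c) ≤ τ⁻¹ * ρ}.indicator
        (fun w => ENNReal.ofReal (τ ^ N) * g w.2) (y, x) := by
    intro y
    rw [coneAvg, ← lintegral_const_mul _ hg,
      ← lintegral_indicator Metric.isClosed_closedBall.measurableSet]
    rfl
  simp only [h1]
  rw [lintegral_lintegral_swap (f := fun y x => {w : Euc N × Euc N |
    dist w.2 (w.1 + τ⁻¹ • c) ≤ τ⁻¹ * ρ}.indicator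
      (fun w => ENNReal.ofReal (τ ^ N) * g w.2) (y, x)) hm.aemeasurable, ← lintegral_const_mul _ hg]
  refine lintegral_congr fun x => ?_
  have h2 : ∀ y, {w : Euc N × Euc N | dist w.2 (w.1 + τ⁻¹ • c) ≤ τ⁻¹ * ρ}.indicator
      (fun w => ENNReal.ofReal (τ ^ N) * g w.2) (y, x) =
      (Metric.closedBall (x + τ⁻¹ • (-c)) (τ⁻¹ * ρ)).indicator
        (fun _ => ENNReal.ofReal (τ ^ N) * g x) y := by
    intro y
    by_cases hy : y ∈ Metric.closedBall (x + τ⁻¹ • (-c)) (τ⁻¹ * ρ)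
    · rw [indicator_of_mem hy, indicator_of_mem (by exact (hmem x y).2 hy)]
    · rw [indicator_of_notMem hy]
      have h3 : (y, x) ∉ {w : Euc N × Euc N | dist w.2 (w.1 + τ⁻¹ • c) ≤ τ⁻¹ * ρ} :=
        fun h => hy ((hmem x y).1 h)
      exact indicator_of_notMem h3 _
  simp only [h2]
  rw [lintegral_indicator Metric.isClosed_closedBall.measurableSet, setLIntegral_const,
    mul_right_comm, volume_coneBall (-c) hρ hτ x]

/-- The cone potential maps `L^q` to `L^{qs}` if `N (s - 1) ≤ 1 / 2`. By Jensen, the `q`-th power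
of the cone average of `g` is controlled by the cone average `J` of `g ^ q`. The integral of `J`
does not depend on `τ` and `J ≤ τ ^ N ∫ g ^ q`, so the integral of `J ^ s` is of order
`τ ^ (N (s - 1))`, which is integrable against `τ⁻² dτ`. -/
lemma lintegral_conePotential_lt_top {N : ℕ} (c : Euc N) {ρ : ℝ} (hρ : 0 ≤ ρ)
    {g : Euc N → ℝ≥0∞} (hg : Measurable g) {q s : ℝ} (hq : 1 ≤ q) (hs : 1 ≤ s)
    (hNs : N * (s - 1) ≤ 1 / 2) (hI : ∫⁻ x, g x ^ q < ⊤) :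
    ∫⁻ y, (∫⁻ τ, coneAvg c ρ g τ y ∂scaleMeasure) ^ (q * s) < ⊤ := by
  set I := ∫⁻ x, g x ^ q with hIdef
  set β := ENNReal.ofReal (ρ ^ N) * volume (Metric.ball (0 : Euc N) 1) with hβ
  have hβt : β ≠ ⊤ := ENNReal.mul_ne_top ENNReal.ofReal_ne_top measure_ball_lt_top.ne
  have hgq : Measurable fun x => g x ^ q := hg.pow_const q
  have hqs : 1 ≤ q * s := one_le_mul_of_one_le_of_one_le hq hs
  set m := scaleMeasure univ with hm
  have hmeas : Measurable fun z : Euc N × ℝ => coneAvg c ρ g z.2 z.1 ^ (q * s) :=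
    (measurable_coneAvg c ρ hg).pow_const _
  have hpt : ∀ τ : ℝ, 1 < τ → ∫⁻ y, coneAvg c ρ g τ y ^ (q * s) ≤
      (β ^ (q - 1)) ^ s * (I ^ (s - 1) * (β * I)) * ENNReal.ofReal (τ ^ (N * (s - 1))) := by
    intro τ hτ
    have hτ0 : 0 < τ := one_pos.trans hτ
    have hJm : Measurable fun y => coneAvg c ρ (fun x => g x ^ q) τ y :=
      (measurable_coneAvg c ρ hgq).comp (measurable_id.prodMk measurable_const)
    have hJ : ∀ y, coneAvg c ρ g τ y ^ (q * s) ≤ (β ^ (q - 1)) ^ s *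
        ((ENNReal.ofReal (τ ^ N) * I) ^ (s - 1) * coneAvg c ρ (fun x => g x ^ q) τ y) := by
      intro y
      rw [ENNReal.rpow_mul]
      refine (ENNReal.rpow_le_rpow (coneAvg_rpow_le c hρ hg hq hτ0 y) (by linarith)).trans ?_
      rw [ENNReal.mul_rpow_of_nonneg _ _ (by linarith)]
      gcongr
      set J := coneAvg c ρ (fun x => g x ^ q) τ y with hJdef
      have hJle : J ≤ ENNReal.ofReal (τ ^ N) * I := by
        rw [hJdef, coneAvg]
        gcongr
        exact setLIntegral_le_lintegral _ _
      calc J ^ s = J ^ ((s - 1) + 1) := by rw [sub_add_cancel]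
        _ = J ^ (s - 1) * J := by
          rw [ENNReal.rpow_add_of_nonneg _ _ (by linarith) zero_le_one, ENNReal.rpow_one]
        _ ≤ _ := by gcongr
    calc ∫⁻ y, coneAvg c ρ g τ y ^ (q * s) ≤ ∫⁻ y, (β ^ (q - 1)) ^ s *
        ((ENNReal.ofReal (τ ^ N) * I) ^ (s - 1) * coneAvg c ρ (fun x => g x ^ q) τ y) :=
          lintegral_mono hJ
      _ = (β ^ (q - 1)) ^ s * ((ENNReal.ofReal (τ ^ N) * I) ^ (s - 1) * (β * I)) := by
          rw [lintegral_const_mul _ (hJm.const_mul _), lintegral_const_mul _ hJm,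
            lintegral_coneAvg c hρ hgq hτ0]
      _ = _ := by
          rw [ENNReal.mul_rpow_of_nonneg (ENNReal.ofReal (τ ^ N)) I (by linarith),
            ENNReal.ofReal_rpow_of_pos (pow_pos hτ0 N), ← Real.rpow_natCast τ N,
            ← Real.rpow_mul hτ0.le]
          ring
  calc ∫⁻ y, (∫⁻ τ, coneAvg c ρ g τ y ∂scaleMeasure) ^ (q * s)
      ≤ ∫⁻ y, m ^ (q * s - 1) * ∫⁻ τ, coneAvg c ρ g τ y ^ (q * s) ∂scaleMeasure := by
        refine lintegral_mono fun y => lintegral_rpow_le_mul ?_ hqs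
        exact ((measurable_coneAvg c ρ hg).comp
          (measurable_const.prodMk measurable_id)).aemeasurable
    _ = m ^ (q * s - 1) * ∫⁻ τ, ∫⁻ y, coneAvg c ρ g τ y ^ (q * s) ∂volume ∂scaleMeasure := by
        rw [lintegral_const_mul _ hmeas.lintegral_prod_right',
          lintegral_lintegral_swap hmeas.aemeasurable]
    _ ≤ m ^ (q * s - 1) * ∫⁻ τ, (β ^ (q - 1)) ^ s * (I ^ (s - 1) * (β * I)) *
          ENNReal.ofReal (τ ^ (N * (s - 1))) ∂scaleMeasure := by
        refine mul_le_mul_right ?_ _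
        exact lintegral_mono_ae (ae_scaleMeasure hpt)
    _ < ⊤ := by
        rw [lintegral_const_mul _ (by fun_prop)]
        refine ENNReal.mul_lt_top (ENNReal.rpow_lt_top_of_nonneg (by linarith)
          (measure_ne_top _ _)) (ENNReal.mul_lt_top (ENNReal.mul_lt_top ?_
            (ENNReal.mul_lt_top ?_ (ENNReal.mul_lt_top hβt.lt_top hI)))
              (lintegral_scaleMeasure_rpow_lt_top hNs))
        · exact ENNReal.rpow_lt_top_of_nonneg (by linarith)
            (ENNReal.rpow_lt_top_of_nonneg (by linarith) hβt).ne
        · exact ENNReal.rpow_lt_top_of_nonneg (by linarith) hI.ne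

/-! ### The cone kernel and its derivative in the scale -/

/-- The kernel `x ↦ τ ^ N η (τ (x - y))`, the density of the cone average at scale `τ`. -/
def coneKernel {N : ℕ} (η : Euc N → ℝ) (y : Euc N) (τ : ℝ) (x : Euc N) : ℝ :=
  τ ^ N * η (τ • (x - y))

/-- The derivative of the cone kernel in `τ`. -/
def coneKernelDeriv {N : ℕ} (η : Euc N → ℝ) (y : Euc N) (τ : ℝ) (x : Euc N) : ℝ :=
  N * τ ^ (N - 1) * η (τ • (x - y)) + τ ^ N * fderiv ℝ η (τ • (x - y)) (x - y)

/-- The components of the vector field whose divergence is the derivative of the cone kernel. -/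
def coneField {N : ℕ} (η : Euc N → ℝ) (y : Euc N) (τ : ℝ) (j : Fin N) (x : Euc N) : ℝ :=
  (x - y) j * (τ ^ (N - 1) * η (τ • (x - y)))

lemma hasDerivAt_coneKernel {N : ℕ} {η : Euc N → ℝ} (hη : ContDiff ℝ (⊤ : ℕ∞) η) (y x : Euc N)
    (τ : ℝ) : HasDerivAt (fun τ => coneKernel η y τ x) (coneKernelDeriv η y τ x) τ := by
  have h1 : HasDerivAt (fun τ : ℝ => τ • (x - y)) (x - y) τ := by
    simpa using (hasDerivAt_id τ).smul_const (x - y)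
  have h2 := ((hη.differentiable (by simp)) (τ • (x - y))).hasFDerivAt.comp_hasDerivAt τ h1
  exact (hasDerivAt_pow N τ).mul h2

lemma contDiff_coneField {N : ℕ} {η : Euc N → ℝ} (hη : ContDiff ℝ (⊤ : ℕ∞) η) (y : Euc N)
    (τ : ℝ) (j : Fin N) : ContDiff ℝ (⊤ : ℕ∞) (coneField η y τ j) := by
  unfold coneField
  have h1 : ContDiff ℝ (⊤ : ℕ∞) fun x : Euc N => (x - y) j :=
    (EuclideanSpace.proj (𝕜 := ℝ) j).contDiff.comp (contDiff_id.sub contDiff_const)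
  have h2 : ContDiff ℝ (⊤ : ℕ∞) fun x : Euc N => τ • (x - y) :=
    (contDiff_id.sub contDiff_const).const_smul τ
  exact h1.mul (contDiff_const.mul (hη.comp h2))

/-- The `τ`-derivative of the cone kernel is a divergence in `x`. -/
lemma sum_fderiv_coneField {N : ℕ} {η : Euc N → ℝ} (hη : ContDiff ℝ (⊤ : ℕ∞) η) (y x : Euc N)
    (τ : ℝ) : ∑ j, fderiv ℝ (coneField η y τ j) x (EuclideanSpace.single j 1) =
      coneKernelDeriv η y τ x := by
  have hf : ∀ j, fderiv ℝ (coneField η y τ j) x (EuclideanSpace.single j 1) =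
      τ ^ (N - 1) * η (τ • (x - y)) + τ ^ N * ((x - y) j *
        fderiv ℝ η (τ • (x - y)) (EuclideanSpace.single j 1)) := by
    intro j
    have h0 : HasFDerivAt (fun x : Euc N => x - y) (ContinuousLinearMap.id ℝ _) x :=
      (hasFDerivAt_id x).sub_const y
    have h1 : HasFDerivAt (fun x : Euc N => (x - y) j)
        ((EuclideanSpace.proj (𝕜 := ℝ) j).comp (ContinuousLinearMap.id ℝ _)) x :=
      (EuclideanSpace.proj (𝕜 := ℝ) j).hasFDerivAt.comp x h0
    have h2 : HasFDerivAt (fun x : Euc N => η (τ • (x - y)))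
        ((fderiv ℝ η (τ • (x - y))).comp (τ • ContinuousLinearMap.id ℝ _)) x :=
      HasFDerivAt.comp x ((hη.differentiable (by simp)) (τ • (x - y))).hasFDerivAt
        (h0.const_smul τ)
    have h3 := h1.mul (h2.const_mul (τ ^ (N - 1)))
    have hN : τ ^ N = τ ^ (N - 1) * τ := by
      rw [← pow_succ, Nat.sub_add_cancel (by have := j.2; omega)]
    have h4 : fderiv ℝ (coneField η y τ j) x = _ := h3.fderiv
    rw [h4, hN]
    simp
    ring
  simp only [hf, Finset.sum_add_distrib, ← Finset.mul_sum]
  rw [coneKernelDeriv]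
  congr 1
  · simp; ring
  · have key : ∀ (L : Euc N →L[ℝ] ℝ) (z : Euc N),
        ∑ j, z j * L (EuclideanSpace.single j 1) = L z := fun L z => by
      conv_rhs => rw [← (EuclideanSpace.basisFun (Fin N) ℝ).sum_repr z]
      rw [map_sum]
      simp
    rw [key]

/-- `‖F T - F 1‖ ≤ ∫ ‖F'‖`, with no integrability assumption on `F'`. -/
lemma enorm_sub_le_lintegral_deriv {F F' : ℝ → ℝ} (hF : ∀ τ, HasDerivAt F (F' τ) τ) {T : ℝ}
    (hT : 1 ≤ T) : ‖F T - F 1‖ₑ ≤ ∫⁻ τ in Ioi 1, ‖F' τ‖ₑ := by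
  by_cases htop : ∫⁻ τ in Ioi 1, ‖F' τ‖ₑ = ⊤
  · rw [htop]; exact le_top
  have hm : Measurable F' := by
    rw [show F' = deriv F from funext fun τ => (hF τ).deriv.symm]
    exact measurable_deriv F
  have hint : IntegrableOn F' (Ioi 1) := ⟨hm.aestronglyMeasurable, lt_top_iff_ne_top.2 htop⟩
  have hint' : IntervalIntegrable F' volume 1 T :=
    (intervalIntegrable_iff_integrableOn_Ioc_of_le hT).2 (hint.mono_set Ioc_subset_Ioi_self)
  rw [← intervalIntegral.integral_eq_sub_of_hasDerivAt (fun τ _ => hF τ) hint',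
    intervalIntegral.integral_of_le hT]
  exact (enorm_integral_le_lintegral_enorm _).trans (lintegral_mono_set Ioc_subset_Ioi_self)

lemma mem_coneBall_iff {N : ℕ} {c x y : Euc N} {ρ τ : ℝ} (hτ : 0 < τ) :
    τ • (x - y) ∈ Metric.closedBall c ρ ↔ x ∈ Metric.closedBall (y + τ⁻¹ • c) (τ⁻¹ * ρ) := by
  rw [Metric.mem_closedBall, Metric.mem_closedBall, dist_eq_norm, dist_eq_norm]
  have : x - (y + τ⁻¹ • c) = τ⁻¹ • (τ • (x - y) - c) := by
    rw [smul_sub, inv_smul_smul₀ hτ.ne']; abel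
  rw [this, norm_smul, Real.norm_of_nonneg (inv_pos.2 hτ).le,
    mul_le_mul_iff_right₀ (inv_pos.2 hτ)]

/-- The cone kernel averages of an integrable function converge almost everywhere to the function as
the scale `τ⁻¹` tends to zero. -/
lemma ae_tendsto_integral_coneKernel {N : ℕ} {η : Euc N → ℝ} (hηc : Continuous η) {c : Euc N}
    {ρ M : ℝ} (hρ : 0 < ρ) (hηM : ∀ z, |η z| ≤ M) (hηs : ∀ z, z ∉ Metric.closedBall c ρ → η z = 0)
    (hη1 : ∫ z, η z = 1) {u : Euc N → ℝ} (hu : Integrable u) :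
    ∀ᵐ y, Tendsto (fun τ : ℝ => ∫ x, coneKernel η y τ x * u x) atTop (𝓝 (u y)) := by
  have hM : 0 ≤ M := (abs_nonneg _).trans (hηM 0)
  filter_upwards [IsUnifLocDoublingMeasure.ae_tendsto_average_norm_sub volume
    hu.locallyIntegrable (‖c‖ / ρ)] with y hy
  have hδ : Tendsto (fun τ : ℝ => τ⁻¹ * ρ) atTop (𝓝[>] 0) := by
    refine tendsto_nhdsWithin_iff.2 ⟨by simpa using tendsto_inv_atTop_zero.mul_const ρ, ?_⟩
    filter_upwards [eventually_gt_atTop 0] with τ hτ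
    exact mul_pos (inv_pos.2 hτ) hρ
  have hlim := hy (fun τ : ℝ => y + τ⁻¹ • c) (fun τ => τ⁻¹ * ρ) hδ (by
    filter_upwards [eventually_gt_atTop 0] with τ hτ
    rw [Metric.mem_closedBall', dist_eq_norm, add_sub_cancel_left, norm_smul,
      Real.norm_of_nonneg (inv_pos.2 hτ).le]
    refine le_of_eq ?_
    field_simp)
  set β := ρ ^ N * (volume (Metric.ball (0 : Euc N) 1)).toReal with hβ
  have hlim2 := hlim.const_mul (M * β)
  rw [mul_zero] at hlim2
  refine tendsto_iff_norm_sub_tendsto_zero.2 (squeeze_zero' (Eventually.of_forall fun _ =>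
    norm_nonneg _) ?_ hlim2)
  filter_upwards [eventually_gt_atTop 0] with τ hτ
  set B := Metric.closedBall (y + τ⁻¹ • c) (τ⁻¹ * ρ) with hB
  have hkc : Continuous (coneKernel η y τ) := by
    unfold coneKernel; fun_prop
  have hkM : ∀ x, |coneKernel η y τ x| ≤ τ ^ N * M := fun x => by
    rw [coneKernel, abs_mul, abs_of_pos (pow_pos hτ N)]
    exact mul_le_mul_of_nonneg_left (hηM _) (pow_pos hτ N).le
  have hk0 : ∀ x, x ∉ B → coneKernel η y τ x = 0 := fun x hx => by
    rw [coneKernel, hηs _ (fun h => hx ((mem_coneBall_iff hτ).1 h)), mul_zero]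
  have hkint : Integrable (coneKernel η y τ) :=
    hkc.integrable_of_hasCompactSupport
      (HasCompactSupport.intro (isCompact_closedBall _ _) hk0)
  have hk1 : ∫ x, coneKernel η y τ x = 1 := by
    have h1 : ∫ x, η (τ • (x - y)) = ∫ x, η (τ • x) :=
      integral_sub_right_eq_self (fun x => η (τ • x)) y
    simp only [coneKernel]
    rw [integral_const_mul, h1, Measure.integral_comp_smul, hη1, finrank_euclideanSpace,
      Fintype.card_fin, smul_eq_mul, mul_one, abs_of_pos (inv_pos.2 (pow_pos hτ N)),
      mul_inv_cancel₀ (pow_pos hτ N).ne']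
  have hku : Integrable fun x => coneKernel η y τ x * u x :=
    hu.bdd_mul (c := τ ^ N * M) hkc.aestronglyMeasurable (Eventually.of_forall hkM)
  have hvol : τ ^ N * volume.real B = β := by
    have h := congrArg ENNReal.toReal (volume_coneBall c hρ.le hτ y)
    rwa [ENNReal.toReal_mul, ENNReal.toReal_mul, ENNReal.toReal_ofReal (pow_pos hτ N).le,
      ENNReal.toReal_ofReal (pow_pos hρ N).le] at h
  have hvpos : volume.real B ≠ 0 := by
    have : 0 < β := mul_pos (pow_pos hρ N) (ENNReal.toReal_pos
      (Metric.measure_ball_pos _ _ one_pos).ne' measure_ball_lt_top.ne)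
    intro h0
    rw [h0, mul_zero] at hvol
    exact this.ne hvol
  have hnint : IntegrableOn (fun x => ‖u x - u y‖) B :=
    (hu.integrableOn.sub (integrableOn_const measure_closedBall_lt_top.ne)).norm
  calc ‖(∫ x, coneKernel η y τ x * u x) - u y‖
      = ‖∫ x, coneKernel η y τ x * (u x - u y)‖ := by
        simp only [mul_sub]
        rw [integral_sub hku (hkint.mul_const _), integral_mul_const, hk1, one_mul]
    _ = ‖∫ x in B, coneKernel η y τ x * (u x - u y)‖ := by
        rw [setIntegral_eq_integral_of_forall_compl_eq_zero]
        intro x hx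
        rw [hk0 x hx, zero_mul]
    _ ≤ ∫ x in B, τ ^ N * M * ‖u x - u y‖ := by
        refine norm_integral_le_of_norm_le (hnint.const_mul _)
          (Eventually.of_forall fun x => ?_)
        rw [norm_mul]
        exact mul_le_mul_of_nonneg_right (hkM x) (norm_nonneg _)
    _ = M * β * ⨍ x in B, ‖u x - u y‖ := by
        rw [integral_const_mul, setAverage_eq, smul_eq_mul, ← hvol]
        field_simp

/-- Differentiation under the integral sign. -/
lemma hasDerivAt_integral_coneKernel {N : ℕ} {η : Euc N → ℝ} (hη : ContDiff ℝ (⊤ : ℕ∞) η)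
    {M M' : ℝ} (hηM : ∀ z, |η z| ≤ M) (hηM' : ∀ z, ‖fderiv ℝ η z‖ ≤ M')
    {Ω : Set (Euc N)} (hΩm : MeasurableSet Ω) (hΩb : Bornology.IsBounded Ω)
    {u : Euc N → ℝ} (hu : IntegrableOn u Ω) (y : Euc N) (τ : ℝ) :
    HasDerivAt (fun τ => ∫ x in Ω, coneKernel η y τ x * u x)
      (∫ x in Ω, coneKernelDeriv η y τ x * u x) τ := by
  obtain ⟨r, hr⟩ := hΩb.subset_closedBall y
  have hM : 0 ≤ M := (abs_nonneg _).trans (hηM 0)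
  have hM' : 0 ≤ M' := (norm_nonneg _).trans (hηM' 0)
  have hηc : Continuous η := hη.continuous
  have hη'c : Continuous (fderiv ℝ η) := hη.continuous_fderiv (by simp)
  have hkc : ∀ τ, Continuous (coneKernel η y τ) := fun τ => by unfold coneKernel; fun_prop
  have hk'c : ∀ τ, Continuous (coneKernelDeriv η y τ) := fun τ => by
    unfold coneKernelDeriv
    have h : Continuous fun x : Euc N => τ • (x - y) := by fun_prop
    have : Continuous fun x : Euc N => fderiv ℝ η (τ • (x - y)) (x - y) :=
      (hη'c.comp h).clm_apply (by fun_prop)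
    fun_prop
  set b := |τ| + 1 with hb
  have hb0 : 0 ≤ b := by positivity
  refine (hasDerivAt_integral_of_dominated_loc_of_deriv_le (μ := volume.restrict Ω)
    (F := fun τ x => coneKernel η y τ x * u x) (F' := fun τ x => coneKernelDeriv η y τ x * u x)
    (s := Metric.ball τ 1)
    (bound := fun x => (N * b ^ (N - 1) * M + b ^ N * (M' * r)) * ‖u x‖)
    (Metric.ball_mem_nhds τ one_pos) (Eventually.of_forall fun τ' => ?_) ?_ ?_ ?_ ?_ ?_).2
  · exact (hkc τ').aestronglyMeasurable.mul hu.1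
  · refine hu.bdd_mul (c := |τ| ^ N * M) (hkc τ).aestronglyMeasurable
      (Eventually.of_forall fun x => ?_)
    rw [coneKernel, norm_mul, norm_pow, Real.norm_eq_abs, Real.norm_eq_abs]
    gcongr
    exact hηM _
  · exact (hk'c τ).aestronglyMeasurable.mul hu.1
  · filter_upwards [ae_restrict_mem hΩm] with x hx τ' hτ'
    have hxr : ‖x - y‖ ≤ r := by simpa [dist_eq_norm] using hr hx
    have hτb : |τ'| ≤ b := by
      have h1 : |τ' - τ| < 1 := by simpa [Real.dist_eq] using hτ'
      have h2 := abs_sub_abs_le_abs_sub τ' τ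
      rw [hb]; linarith
    rw [norm_mul]
    gcongr
    rw [coneKernelDeriv]
    refine (norm_add_le _ _).trans (add_le_add ?_ ?_)
    · rw [norm_mul, norm_mul, norm_pow, Real.norm_eq_abs, Real.norm_eq_abs, Real.norm_eq_abs,
        Nat.abs_cast]
      gcongr
      exact hηM _
    · rw [norm_mul, norm_pow, Real.norm_eq_abs]
      gcongr
      refine ((fderiv ℝ η (τ' • (x - y))).le_opNorm _).trans ?_
      gcongr
      exact hηM' _
  · exact hu.norm.const_mul _
  · exact Eventually.of_forall fun x τ' _ => (hasDerivAt_coneKernel hη y x τ').mul_const _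

/-- Testing the weak gradient with the cone field turns the `τ`-derivative of the cone kernel
average of `v` into an integral of `∇v`, bounded by `τ⁻²` times its cone average. The factor `τ⁻²`
appears because the cone field is of size `τ ^ (N - 2)`. -/
lemma enorm_integral_coneKernelDeriv_le {N d : ℕ} {η : Euc N → ℝ} (hη : ContDiff ℝ (⊤ : ℕ∞) η)
    {c : Euc N} {ρ M : ℝ} (hρ : 0 < ρ) (hηM : ∀ z, |η z| ≤ M)
    (hηs : ∀ z, z ∉ Metric.closedBall c ρ → η z = 0)
    {Ω : Set (Euc N)} {v : Euc N → Euc d} {G : Euc N → Mat d N} (hG : IsWeakGrad Ω v G)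
    (i : Fin d) (hv : IntegrableOn (fun x => v x i) Ω) {V : Set (Euc N)}
    (hV : V ⊆ Ω) {g : Euc N → ℝ≥0∞}
    (hg : ∀ᵐ x, x ∈ V → ∀ j, ‖G x i j‖ₑ ≤ g x) {y : Euc N} {τ : ℝ} (hτ : 0 < τ)
    (hyV : Metric.closedBall (y + τ⁻¹ • c) (τ⁻¹ * ρ) ⊆ V) :
    ‖∫ x in Ω, coneKernelDeriv η y τ x * v x i‖ₑ ≤
      N * ENNReal.ofReal ((‖c‖ + ρ) * M) *
        (ENNReal.ofReal (τ ^ (-2 : ℝ)) * coneAvg c ρ g τ y) := by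
  set B := Metric.closedBall (y + τ⁻¹ • c) (τ⁻¹ * ρ) with hB
  have hM : 0 ≤ M := (abs_nonneg _).trans (hηM 0)
  have h0 : ∀ j x, x ∉ B → coneField η y τ j x = 0 := fun j x hx => by
    rw [coneField, hηs _ (fun h => hx ((mem_coneBall_iff hτ).1 h))]; simp
  have hcs : ∀ j, HasCompactSupport (coneField η y τ j) := fun j =>
    HasCompactSupport.intro (isCompact_closedBall _ _) (h0 j)
  have hts : ∀ j, tsupport (coneField η y τ j) ⊆ Ω := fun j => by
    refine (closure_minimal ?_ Metric.isClosed_closedBall).trans (hyV.trans hV)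
    intro x hx
    by_contra hxB
    exact hx (h0 j x hxB)
  have hcd := contDiff_coneField hη y τ
  have hint : ∀ j, IntegrableOn
      (fun x => fderiv ℝ (coneField η y τ j) x (EuclideanSpace.single j 1) * v x i) Ω := by
    intro j
    have hc : Continuous fun x => fderiv ℝ (coneField η y τ j) x (EuclideanSpace.single j 1) :=
      ((hcd j).continuous_fderiv (by simp)).clm_apply continuous_const
    obtain ⟨C, hC⟩ := (((hcs j).fderiv ℝ).comp_left (g := fun L : Euc N →L[ℝ] ℝ =>
      L (EuclideanSpace.single j 1)) (by simp)).exists_bound_of_continuous hc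
    exact hv.bdd_mul (c := C) hc.aestronglyMeasurable (Eventually.of_forall hC)
  have heq : ∫ x in Ω, coneKernelDeriv η y τ x * v x i =
      -∑ j, ∫ x in Ω, coneField η y τ j x * G x i j := by
    simp only [← sum_fderiv_coneField hη, Finset.sum_mul]
    rw [integral_finsetSum _ fun j _ => hint j, ← Finset.sum_neg_distrib]
    refine Finset.sum_congr rfl fun j _ => ?_
    rw [hG _ (hcd j) (hcs j) (hts j) i j, neg_neg]
  rw [heq, enorm_neg]
  have hbd : ∀ j, ‖∫ x in Ω, coneField η y τ j x * G x i j‖ₑ ≤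
      ENNReal.ofReal ((‖c‖ + ρ) * M) * (ENNReal.ofReal (τ ^ (-2 : ℝ)) * coneAvg c ρ g τ y) := by
    intro j
    have hN : τ ^ (N - 1) = τ ^ N * τ⁻¹ := by
      have : τ ^ N = τ ^ (N - 1) * τ := by
        rw [← pow_succ, Nat.sub_add_cancel (by have := j.2; omega)]
      rw [this, mul_inv_cancel_right₀ hτ.ne']
    have hfb : ∀ x ∈ B, |coneField η y τ j x| ≤
        (‖c‖ + ρ) * M * (τ ^ (-2 : ℝ) * τ ^ N) := by
      intro x hx
      have h1 : ‖x - y‖ ≤ τ⁻¹ * (‖c‖ + ρ) := by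
        have h2 := (mem_coneBall_iff hτ).2 hx
        rw [Metric.mem_closedBall, dist_eq_norm] at h2
        have h3 : ‖τ • (x - y)‖ ≤ ‖c‖ + ρ := by
          have := norm_le_insert' (τ • (x - y)) c
          linarith
        rw [norm_smul, Real.norm_of_nonneg hτ.le] at h3
        rw [inv_mul_eq_div, le_div_iff₀ hτ]
        linarith
      have h4 : |(x - y) j| ≤ ‖x - y‖ := PiLp.norm_apply_le (x - y) j
      rw [coneField, abs_mul, abs_mul, abs_of_pos (pow_pos hτ _)]
      calc |(x - y) j| * (τ ^ (N - 1) * |η (τ • (x - y))|)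
          ≤ τ⁻¹ * (‖c‖ + ρ) * (τ ^ (N - 1) * M) := by
            gcongr
            · exact h4.trans h1
            · exact hηM _
        _ = _ := by
            rw [hN, Real.rpow_neg hτ.le, Real.rpow_two]
            field_simp
    calc ‖∫ x in Ω, coneField η y τ j x * G x i j‖ₑ
        ≤ ∫⁻ x in Ω, ‖coneField η y τ j x * G x i j‖ₑ := enorm_integral_le_lintegral_enorm _
      _ ≤ ∫⁻ x, ‖coneField η y τ j x * G x i j‖ₑ := setLIntegral_le_lintegral _ _
      _ ≤ ∫⁻ x, B.indicator (fun x =>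
            ENNReal.ofReal ((‖c‖ + ρ) * M * (τ ^ (-2 : ℝ) * τ ^ N)) * g x) x := by
          refine lintegral_mono_ae ?_
          filter_upwards [hg] with x hx
          by_cases hxB : x ∈ B
          · rw [indicator_of_mem hxB, enorm_mul]
            gcongr
            · rw [Real.enorm_eq_ofReal_abs]
              exact ENNReal.ofReal_le_ofReal (hfb x hxB)
            · exact hx (hyV hxB) j
          · rw [indicator_of_notMem hxB, h0 j x hxB]; simp
      _ = _ := by
          rw [lintegral_indicator Metric.isClosed_closedBall.measurableSet,
            lintegral_const_mul' _ _ ENNReal.ofReal_ne_top, coneAvg,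
            ENNReal.ofReal_mul (p := (‖c‖ + ρ) * M) (by positivity),
            ENNReal.ofReal_mul (p := τ ^ (-2 : ℝ)) (by positivity)]
          ring
  calc ‖∑ j, ∫ x in Ω, coneField η y τ j x * G x i j‖ₑ
      ≤ ∑ j, ‖∫ x in Ω, coneField η y τ j x * G x i j‖ₑ := enorm_sum_le _ _
    _ ≤ ∑ _j : Fin N, ENNReal.ofReal ((‖c‖ + ρ) * M) *
        (ENNReal.ofReal (τ ^ (-2 : ℝ)) * coneAvg c ρ g τ y) := Finset.sum_le_sum fun j _ => hbd j
    _ = _ := by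
      rw [Finset.sum_const, Finset.card_univ, Fintype.card_fin, nsmul_eq_mul, mul_assoc]

/-! ### Gain of integrability under a cone condition -/

/-- A weakly differentiable function is bounded, on a set whose points are vertices of cones
contained in `V`, by a constant plus a multiple of the cone potential of its gradient on `V`.
The cone kernel averages run from the value at the vertex (`τ → ∞`) to a quantity controlled by
the `L¹` norm (`τ = 1`), and their derivative in `τ` is estimated by the gradient. -/
lemma ae_enorm_le_conePotential {N d : ℕ} (c : Euc N) {ρ : ℝ} (hρ : 0 < ρ) {Ω : Set (Euc N)}
    (hΩ : IsOpen Ω) (hΩb : Bornology.IsBounded Ω) {v : Euc N → Euc d} {G : Euc N → Mat d N}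
    (hG : IsWeakGrad Ω v G) (hv : IntegrableOn v Ω) {V : Set (Euc N)} (hV : V ⊆ Ω)
    {g : Euc N → ℝ≥0∞} (hgm : Measurable g) (hg : ∀ᵐ x, x ∈ V → ∀ i j, ‖G x i j‖ₑ ≤ g x)
    {W : Set (Euc N)} (hW : W ⊆ Ω)
    (hcone : ∀ y ∈ W, ∀ τ : ℝ, 1 ≤ τ → Metric.closedBall (y + τ⁻¹ • c) (τ⁻¹ * ρ) ⊆ V) :
    ∃ A B : ℝ≥0∞, A ≠ ⊤ ∧ B ≠ ⊤ ∧ ∀ i, ∀ᵐ y, y ∈ W →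
      ‖v y i‖ₑ ≤ A + B * ∫⁻ τ, coneAvg c ρ g τ y ∂scaleMeasure := by
  let b : ContDiffBump c := ⟨ρ / 2, ρ, by positivity, by linarith⟩
  set η : Euc N → ℝ := b.normed volume with hηdef
  have hη : ContDiff ℝ (⊤ : ℕ∞) η := b.contDiff_normed
  have hηcs : HasCompactSupport η := b.hasCompactSupport_normed
  obtain ⟨M, hM⟩ := hηcs.exists_bound_of_continuous hη.continuous
  obtain ⟨M', hM'⟩ := (hηcs.fderiv ℝ).exists_bound_of_continuous
    (hη.continuous_fderiv (by simp))
  have hηs : ∀ z, z ∉ Metric.closedBall c ρ → η z = 0 := by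
    intro z hz
    by_contra h
    have h1 : z ∈ Function.support η := h
    rw [hηdef, b.support_normed_eq] at h1
    exact hz (Metric.ball_subset_closedBall h1)
  have hη1 : ∫ z, η z = 1 := b.integral_normed
  refine ⟨ENNReal.ofReal M * ∫⁻ x in Ω, ‖v x‖ₑ, N * ENNReal.ofReal ((‖c‖ + ρ) * M),
    ENNReal.mul_ne_top ENNReal.ofReal_ne_top hv.2.ne,
    ENNReal.mul_ne_top (ENNReal.natCast_ne_top N) ENNReal.ofReal_ne_top, fun i => ?_⟩
  have hvi : IntegrableOn (fun x => v x i) Ω :=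
    (EuclideanSpace.proj (𝕜 := ℝ) i).integrable_comp hv
  have hae := ae_tendsto_integral_coneKernel hη.continuous hρ hM hηs hη1
    ((integrable_indicator_iff hΩ.measurableSet).2 hvi)
  filter_upwards [hae] with y hy hyW
  rw [indicator_of_mem (hW hyW)] at hy
  set F : ℝ → ℝ := fun τ => ∫ x in Ω, coneKernel η y τ x * v x i with hF
  have hFeq : ∀ τ, ∫ x, coneKernel η y τ x * Ω.indicator (fun x => v x i) x = F τ := by
    intro τ
    change _ = ∫ x in Ω, coneKernel η y τ x * v x i
    rw [← integral_indicator hΩ.measurableSet]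
    congr 1
    ext x
    rw [indicator_mul_right]
  simp only [hFeq] at hy
  have hder := hasDerivAt_integral_coneKernel hη hM hM' hΩ.measurableSet hΩb hvi y
  have hF1 : ‖F 1‖ₑ ≤ ENNReal.ofReal M * ∫⁻ x in Ω, ‖v x‖ₑ := by
    refine (enorm_integral_le_lintegral_enorm _).trans ?_
    rw [← lintegral_const_mul' _ _ ENNReal.ofReal_ne_top]
    refine lintegral_mono fun x => ?_
    rw [enorm_mul]
    gcongr
    · rw [Real.enorm_eq_ofReal_abs, coneKernel, one_pow, one_mul]
      exact ENNReal.ofReal_le_ofReal (hM _)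
    · rw [enorm_le_iff_norm_le]
      exact PiLp.norm_apply_le (v x) i
  have hpm : Measurable fun τ => coneAvg c ρ g τ y :=
    (measurable_coneAvg c ρ hgm).comp (measurable_prodMk_left (x := y))
  have hFT : ∀ T, 1 ≤ T → ‖F T - F 1‖ₑ ≤ N * ENNReal.ofReal ((‖c‖ + ρ) * M) *
      ∫⁻ τ, coneAvg c ρ g τ y ∂scaleMeasure := by
    intro T hT
    refine (enorm_sub_le_lintegral_deriv hder hT).trans ?_
    rw [lintegral_scaleMeasure hpm, ← lintegral_const_mul' _ _
      (ENNReal.mul_ne_top (ENNReal.natCast_ne_top N) ENNReal.ofReal_ne_top)]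
    refine setLIntegral_mono' measurableSet_Ioi fun τ hτ => ?_
    have hτ1 : (1 : ℝ) < τ := hτ
    refine enorm_integral_coneKernelDeriv_le hη hρ hM hηs hG i hvi hV ?_
      (lt_trans one_pos hτ1) (hcone y hyW τ hτ1.le)
    filter_upwards [hg] with x hx hxV j using hx hxV i j
  refine le_of_tendsto hy.enorm ?_
  filter_upwards [eventually_ge_atTop 1] with T hT
  calc ‖F T‖ₑ = ‖F 1 + (F T - F 1)‖ₑ := by rw [add_sub_cancel]
    _ ≤ ‖F 1‖ₑ + ‖F T - F 1‖ₑ := enorm_add_le _ _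
    _ ≤ _ := add_le_add hF1 (hFT T hT)

lemma enorm_le_sum_enorm {d : ℕ} (w : Euc d) : ‖w‖ₑ ≤ ∑ i, ‖w i‖ₑ := by
  conv_lhs => rw [← (EuclideanSpace.basisFun (Fin d) ℝ).sum_repr w]
  refine (enorm_sum_le _ _).trans (Finset.sum_le_sum fun i _ => ?_)
  rw [enorm_smul]
  simp [enorm_eq_nnnorm]

/-- The gain of integrability: if the gradient is in `L^q` then the function is in `L^{qs}` on
sets satisfying a cone condition. -/
lemma lintegral_rpow_lt_top_of_cone {N d : ℕ} (c : Euc N) {ρ : ℝ} (hρ : 0 < ρ)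
    {Ω : Set (Euc N)} (hΩ : IsOpen Ω) (hΩb : Bornology.IsBounded Ω) {v : Euc N → Euc d}
    {G : Euc N → Mat d N} (hG : IsWeakGrad Ω v G) (hv : IntegrableOn v Ω)
    (hGm : ∀ i j, AEMeasurable (fun x => G x i j) (volume.restrict Ω)) {V : Set (Euc N)}
    (hV : V ⊆ Ω) (hVm : MeasurableSet V) {q s : ℝ} (hq : 1 ≤ q) (hs : 1 ≤ s)
    (hNs : N * (s - 1) ≤ 1 / 2) (hI : ∫⁻ x in V, ENNReal.ofReal (mnorm (G x) ^ q) < ⊤)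
    {W : Set (Euc N)} (hW : W ⊆ Ω) (hWm : MeasurableSet W)
    (hcone : ∀ y ∈ W, ∀ τ : ℝ, 1 ≤ τ → Metric.closedBall (y + τ⁻¹ • c) (τ⁻¹ * ρ) ⊆ V) :
    ∫⁻ x in W, ENNReal.ofReal (‖v x‖ ^ (q * s)) < ⊤ := by
  have hG' : AEMeasurable G (volume.restrict V) :=
    aemeasurable_pi_lambda _ fun i => aemeasurable_pi_lambda _ fun j =>
      (hGm i j).mono_measure (Measure.restrict_mono hV le_rfl)
  have h0 : AEMeasurable (fun x => ENNReal.ofReal (mnorm (G x))) (volume.restrict V) :=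
    (measurable_mnorm.comp_aemeasurable hG').ennreal_ofReal
  set g : Euc N → ℝ≥0∞ := V.indicator (h0.mk _) with hgdef
  have hgm : Measurable g := h0.measurable_mk.indicator hVm
  have hgG : ∀ᵐ x, x ∈ V → ENNReal.ofReal (mnorm (G x)) = g x := by
    filter_upwards [(ae_restrict_iff' hVm).1 h0.ae_eq_mk] with x hx hxV
    rw [hgdef, indicator_of_mem hxV]
    exact hx hxV
  have hg : ∀ᵐ x, x ∈ V → ∀ i j, ‖G x i j‖ₑ ≤ g x := by
    filter_upwards [hgG] with x hx hxV i j
    rw [← hx hxV, Real.enorm_eq_ofReal_abs]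
    exact ENNReal.ofReal_le_ofReal (abs_le_mnorm _ i j)
  have hgI : ∫⁻ x, g x ^ q < ⊤ := by
    have h1 : ∀ x, g x ^ q = V.indicator (fun x => g x ^ q) x := by
      intro x
      by_cases hx : x ∈ V
      · rw [indicator_of_mem hx]
      · rw [indicator_of_notMem hx, hgdef, indicator_of_notMem hx,
          ENNReal.zero_rpow_of_pos (by linarith)]
    rw [lintegral_congr h1, lintegral_indicator hVm]
    refine lt_of_le_of_lt (lintegral_mono_ae ?_) hI
    filter_upwards [(ae_restrict_iff' hVm).2 hgG] with x hx
    rw [← hx, ENNReal.ofReal_rpow_of_nonneg (mnorm_nonneg _) (by linarith)]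
  have hpot := lintegral_conePotential_lt_top c hρ.le hgm hq hs hNs hgI
  obtain ⟨A, B, hA, hB, hAB⟩ :=
    ae_enorm_le_conePotential c hρ hΩ hΩb hG hv hV hgm hg hW hcone
  have hr : 1 ≤ q * s := one_le_mul_of_one_le_of_one_le hq hs
  have hr0 : 0 ≤ q * s := by linarith
  set P : Euc N → ℝ≥0∞ := fun y => ∫⁻ τ, coneAvg c ρ g τ y ∂scaleMeasure with hP
  set D : ℝ≥0∞ := (d : ℝ≥0∞) ^ (q * s) * 2 ^ (q * s - 1) with hD
  have hDt : D ≠ ⊤ := ENNReal.mul_ne_top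
    (ENNReal.rpow_ne_top_of_nonneg hr0 (ENNReal.natCast_ne_top d))
    (ENNReal.rpow_ne_top_of_nonneg (by linarith) (by norm_num))
  have hWt : volume W ≠ ⊤ := (hΩb.subset hW).measure_lt_top.ne
  have hbd : ∀ᵐ y ∂volume.restrict W, ENNReal.ofReal (‖v y‖ ^ (q * s)) ≤
      D * (A ^ (q * s) + B ^ (q * s) * P y ^ (q * s)) := by
    filter_upwards [(ae_restrict_iff' hWm).2 ((ae_all_iff.2 hAB).mono fun y hy hyW i => hy i hyW)]
      with y hy
    have h1 : ‖v y‖ₑ ≤ d * (A + B * P y) :=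
      (enorm_le_sum_enorm _).trans ((Finset.sum_le_sum fun i _ => hy i).trans (by
        rw [Finset.sum_const, Finset.card_univ, Fintype.card_fin, nsmul_eq_mul]))
    rw [← ENNReal.ofReal_rpow_of_nonneg (norm_nonneg _) hr0, ofReal_norm, hD, mul_assoc]
    refine (ENNReal.rpow_le_rpow h1 hr0).trans ?_
    rw [ENNReal.mul_rpow_of_nonneg _ _ hr0, ← ENNReal.mul_rpow_of_nonneg B _ hr0]
    gcongr
    exact ENNReal.rpow_add_le_mul_rpow_add_rpow _ _ hr
  refine lt_of_le_of_lt (lintegral_mono_ae hbd) ?_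
  rw [lintegral_const_mul' _ _ hDt, lintegral_add_left measurable_const, setLIntegral_const,
    lintegral_const_mul' _ _ (ENNReal.rpow_ne_top_of_nonneg hr0 hB)]
  refine ENNReal.mul_lt_top hDt.lt_top (ENNReal.add_lt_top.2 ⟨?_, ?_⟩)
  · exact ENNReal.mul_lt_top (ENNReal.rpow_ne_top_of_nonneg hr0 hA).lt_top hWt.lt_top
  · exact ENNReal.mul_lt_top (ENNReal.rpow_ne_top_of_nonneg hr0 hB).lt_top
      ((setLIntegral_le_lintegral _ _).trans_lt hpot)

/-! ### The uniform cone condition -/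

lemma updCoord_add_smul_single {n : ℕ} (y : Euc n) (i : Fin n) (t : ℝ) :
    updCoord y i (y i + t) = y + t • EuclideanSpace.single i 1 := by
  ext j
  by_cases hj : j = i
  · subst hj; simp [updCoord]
  · simp [updCoord, hj]

/-- Near each point of its closure, an open set with Lipschitz boundary satisfies a uniform
cone condition: a fixed family of balls shrinking to the vertex stays in the set. -/
lemma exists_cone {N : ℕ} {Ω : Set (Euc N)} (hΩ : IsOpen Ω) (hL : HasLipschitzBoundary Ω)
    {x : Euc N} (hx : x ∈ closure Ω) {U₀ : Set (Euc N)} (hU₀ : U₀ ∈ 𝓝 x) :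
    ∃ (c : Euc N) (ρ : ℝ) (W : Set (Euc N)), 0 < ρ ∧ IsOpen W ∧ x ∈ W ∧ ∀ y ∈ Ω ∩ W,
      ∀ τ : ℝ, 1 ≤ τ → Metric.closedBall (y + τ⁻¹ • c) (τ⁻¹ * ρ) ⊆ Ω ∩ U₀ := by
  by_cases hxΩ : x ∈ Ω
  · obtain ⟨δ, hδ, hball⟩ := Metric.mem_nhds_iff.1 (inter_mem (hΩ.mem_nhds hxΩ) hU₀)
    refine ⟨0, δ / 2, Metric.ball x (δ / 2), by positivity, Metric.isOpen_ball,
      Metric.mem_ball_self (by positivity), fun y hy τ hτ z hz => hball ?_⟩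
    have hτi : τ⁻¹ ≤ 1 := inv_le_one_of_one_le₀ hτ
    rw [smul_zero, add_zero, Metric.mem_closedBall] at hz
    have hy2 : dist y x < δ / 2 := hy.2
    rw [Metric.mem_ball]
    have := dist_triangle z y x
    nlinarith
  · have hfr : x ∈ frontier Ω := by
      rw [hΩ.frontier_eq]; exact ⟨hx, hxΩ⟩
    obtain ⟨U, hU, hxU, e, i₀, f, K, hf, hfi, hΩU⟩ := hL x hfr
    obtain ⟨δ, hδ, hball⟩ := Metric.mem_nhds_iff.1 (inter_mem (hU.mem_nhds hxU) hU₀)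
    have hK : (0 : ℝ) ≤ K := K.2
    -- The opening of the cone: `h > (K + 1) ρ` keeps the balls above the graph.
    set ρ : ℝ := δ / (2 * (K + 3)) with hρdef
    have hρ : 0 < ρ := by positivity
    have hρδ : ρ * (K + 3) = δ / 2 := by rw [hρdef]; field_simp
    set h : ℝ := (K + 2) * ρ with hh
    set c : Euc N := h • e.symm (EuclideanSpace.single i₀ 1) with hc
    have hcn : ‖c‖ = h := by
      rw [hc, norm_smul, e.symm.norm_map, Real.norm_of_nonneg (by positivity)]
      simp
    refine ⟨c, ρ, Metric.ball x (δ / 2), hρ, Metric.isOpen_ball,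
      Metric.mem_ball_self (by positivity), fun y hy τ hτ z hz => ?_⟩
    have hτ0 : 0 < τ⁻¹ := inv_pos.2 (by linarith)
    have hτi : τ⁻¹ ≤ 1 := inv_le_one_of_one_le₀ hτ
    have hyx : dist y x < δ / 2 := hy.2
    set ω : Euc N := z - (y + τ⁻¹ • c) with hω
    have hωn : ‖ω‖ ≤ τ⁻¹ * ρ := by rwa [Metric.mem_closedBall, dist_eq_norm] at hz
    have hzeq : z = (y + ω) + τ⁻¹ • c := by rw [hω]; abel
    have hzy : dist z y ≤ δ / 2 := by
      have h1 : z - y = ω + τ⁻¹ • c := by rw [hω]; abel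
      rw [dist_eq_norm, h1, ← hρδ]
      refine (norm_add_le _ _).trans ?_
      rw [norm_smul, Real.norm_of_nonneg hτ0.le, hcn, hh]
      have : τ⁻¹ * ρ + τ⁻¹ * ((K + 2) * ρ) = τ⁻¹ * (ρ * (K + 3)) := by ring
      have h2 : τ⁻¹ * (ρ * (K + 3)) ≤ 1 * (ρ * (K + 3)) := by gcongr
      linarith
    have hzU : z ∈ U ∩ U₀ := hball (by
      rw [Metric.mem_ball]; have := dist_triangle z y x; linarith)
    have hyU : y ∈ U := (hball (by rw [Metric.mem_ball]; linarith)).1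
    have hyg : f (e y) < e y i₀ := by
      have : y ∈ Ω ∩ U := ⟨hy.1, hyU⟩
      rw [hΩU] at this
      exact this.2
    have hez : e z = e (y + ω) + (τ⁻¹ * h) • EuclideanSpace.single i₀ 1 := by
      rw [hzeq, map_add, hc, map_smul, map_smul, e.apply_symm_apply, smul_smul]
    have hfz : f (e z) = f (e (y + ω)) := by
      rw [hez, ← updCoord_add_smul_single, hfi]
    have hf1 : f (e (y + ω)) ≤ f (e y) + K * ‖ω‖ := by
      have h1 := hf.dist_le_mul (e (y + ω)) (e y)
      rw [e.dist_map, dist_eq_norm (y + ω), add_sub_cancel_left, Real.dist_eq] at h1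
      have := le_abs_self (f (e (y + ω)) - f (e y))
      linarith
    have hcoord : e z i₀ = e y i₀ + e ω i₀ + τ⁻¹ * h := by
      rw [hez, map_add]; simp
    have hωi : -‖ω‖ ≤ e ω i₀ := by
      have h1 := PiLp.norm_apply_le (e ω) i₀
      rw [e.norm_map, Real.norm_eq_abs] at h1
      exact (abs_le.1 h1).1
    have hzΩ : z ∈ Ω ∩ U := by
      rw [hΩU]
      refine ⟨hzU.1, ?_⟩
      have h1 : K * ‖ω‖ ≤ K * (τ⁻¹ * ρ) := by gcongr
      have h2 : τ⁻¹ * h = K * (τ⁻¹ * ρ) + 2 * (τ⁻¹ * ρ) := by rw [hh]; ring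
      have h3 : 0 < τ⁻¹ * ρ := by positivity
      rw [hfz, hcoord, h2]
      linarith
    exact ⟨hzΩ.1, hzU.2⟩

/-! ### Integrability up to a Lipschitz boundary -/

lemma rpow_le_one_add_rpow {t q p : ℝ} (ht : 0 ≤ t) (hq : 0 ≤ q) (hqp : q ≤ p) :
    t ^ q ≤ 1 + t ^ p := by
  rcases le_total t 1 with h | h
  · have h1 := Real.rpow_le_one ht h hq
    have h2 := Real.rpow_nonneg ht p
    linarith
  · have := Real.rpow_le_rpow_of_exponent_le h hqp
    linarith

/-- Monotonicity of modulars in the exponent on sets of finite measure. -/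
lemma lintegral_rpow_lt_top_of_le {N : ℕ} {S : Set (Euc N)} (hS : MeasurableSet S)
    (hSt : volume S ≠ ⊤) {f a b : Euc N → ℝ} (hf : ∀ x, 0 ≤ f x) (ha : ∀ x ∈ S, 0 ≤ a x)
    (hab : ∀ x ∈ S, a x ≤ b x) (hI : ∫⁻ x in S, ENNReal.ofReal (f x ^ b x) < ⊤) :
    ∫⁻ x in S, ENNReal.ofReal (f x ^ a x) < ⊤ := by
  refine lt_of_le_of_lt (b := ∫⁻ x in S, (1 + ENNReal.ofReal (f x ^ b x))) ?_ ?_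
  · refine setLIntegral_mono' hS fun x hx => ?_
    rw [← ENNReal.ofReal_one, ← ENNReal.ofReal_add one_pos.le (Real.rpow_nonneg (hf x) _)]
    exact ENNReal.ofReal_le_ofReal (rpow_le_one_add_rpow (hf x) (ha x hx) (hab x hx))
  · rw [lintegral_add_left measurable_const, setLIntegral_const, one_mul]
    exact ENNReal.add_lt_top.2 ⟨hSt.lt_top, hI⟩

/-- On a bounded Lipschitz open set with an exponent continuous up to the boundary, an integrable
function whose weak gradient has finite modular has finite modular. Near each point the exponent
oscillates by less than the gain of integrability, and finitely many such
neighbourhoods cover the closure. -/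
lemma emod_norm_lt_top {N d : ℕ} {Ω : Set (Euc N)} (hΩ : IsOpen Ω)
    (hΩb : Bornology.IsBounded Ω) (hL : HasLipschitzBoundary Ω) {p : Euc N → ℝ}
    (hp1 : ∀ x, 1 ≤ p x) (hpc : ContinuousOn p (closure Ω)) {v : Euc N → Euc d}
    {G : Euc N → Mat d N} (hG : IsWeakGrad Ω v G) (hv : IntegrableOn v Ω)
    (hGm : ∀ i j, AEMeasurable (fun x => G x i j) (volume.restrict Ω))
    (hI : emod Ω p (fun x => mnorm (G x)) < ⊤) : emod Ω p (fun x => ‖v x‖) < ⊤ := by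
  have hfin : ∀ S ⊆ Ω, volume S ≠ ⊤ := fun S hS => (hΩb.subset hS).measure_lt_top.ne
  have hloc : ∀ x ∈ closure Ω, ∃ t ∈ 𝓝[closure Ω] x,
      ∫⁻ y in Ω ∩ t, ENNReal.ofReal (‖v y‖ ^ p y) < ⊤ := by
    intro x hx
    -- The gain `s` satisfies `N * (s - 1) ≤ 1 / 2`; the oscillation `(s - 1) / 2` of the exponent
    -- is chosen so that `p ≤ p x + (s - 1) / 2 ≤ q * s` near `x`.
    set s : ℝ := 1 + 1 / (2 * (N + 1)) with hs
    have hs1 : 0 < s - 1 := by rw [hs, add_sub_cancel_left]; positivity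
    have hNs : N * (s - 1) ≤ 1 / 2 := by
      rw [hs, add_sub_cancel_left, mul_one_div, div_le_div_iff₀ (by positivity) two_pos]
      linarith
    have hev : ∀ᶠ y in 𝓝[closure Ω] x, dist (p y) (p x) < (s - 1) / 2 :=
      (hpc x hx).eventually (Metric.ball_mem_nhds _ (by positivity))
    obtain ⟨U, hU, hxU, hUp⟩ := mem_nhdsWithin.1 hev
    have hUp' : ∀ y ∈ Ω ∩ U, |p y - p x| < (s - 1) / 2 := fun y hy =>
      hUp ⟨hy.2, subset_closure hy.1⟩
    set q : ℝ := max 1 (p x - (s - 1) / 2) with hq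
    have hq1 : 1 ≤ q := le_max_left _ _
    have hq2 : p x - (s - 1) / 2 ≤ q := le_max_right _ _
    obtain ⟨c, ρ, W, hρ, hW, hxW, hcone⟩ := exists_cone hΩ hL hx (hU.mem_nhds hxU)
    have hgrad : ∫⁻ y in Ω ∩ U, ENNReal.ofReal (mnorm (G y) ^ q) < ⊤ := by
      refine lintegral_rpow_lt_top_of_le (hΩ.inter hU).measurableSet
        (hfin _ inter_subset_left) (fun y => mnorm_nonneg _) (fun _ _ => by linarith)
        (b := p) (fun y hy => max_le (hp1 y) ?_)
        (lt_of_le_of_lt (lintegral_mono_set inter_subset_left) hI)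
      have := (abs_lt.1 (hUp' y hy)).1
      linarith
    have hcone' : ∀ y ∈ Ω ∩ (U ∩ W), ∀ τ : ℝ, 1 ≤ τ →
        Metric.closedBall (y + τ⁻¹ • c) (τ⁻¹ * ρ) ⊆ Ω ∩ U := fun y hy =>
      hcone y ⟨hy.1, hy.2.2⟩
    have hUW : IsOpen (U ∩ W) := hU.inter hW
    have hmain := lintegral_rpow_lt_top_of_cone c hρ hΩ hΩb hG hv hGm inter_subset_left
      (hΩ.inter hU).measurableSet hq1 (by linarith) hNs hgrad inter_subset_left
      (hΩ.inter hUW).measurableSet hcone'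
    refine ⟨U ∩ W, mem_nhdsWithin_of_mem_nhds (hUW.mem_nhds ⟨hxU, hxW⟩), ?_⟩
    refine lintegral_rpow_lt_top_of_le (hΩ.inter hUW).measurableSet
      (hfin _ inter_subset_left) (fun y => norm_nonneg _)
      (fun y _ => zero_le_one.trans (hp1 y)) (fun y hy => ?_) hmain
    have h1 := (abs_lt.1 (hUp' y ⟨hy.1, hy.2.1⟩)).2
    nlinarith
  have hcov : ∫⁻ y in Ω ∩ closure Ω, ENNReal.ofReal (‖v y‖ ^ p y) < ⊤ := by
    refine hΩb.isCompact_closure.induction_on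
      (p := fun S => ∫⁻ y in Ω ∩ S, ENNReal.ofReal (‖v y‖ ^ p y) < ⊤) ?_ ?_ ?_ hloc
    · simp
    · intro S T hST hT
      exact lt_of_le_of_lt (lintegral_mono_set (inter_subset_inter_right _ hST)) hT
    · intro S T hS hT
      rw [inter_union_distrib_left]
      exact lt_of_le_of_lt (lintegral_union_le _ _ _) (ENNReal.add_lt_top.2 ⟨hS, hT⟩)
  rwa [inter_eq_left.2 subset_closure] at hcov

/-- Corollary `Corvarphi`: lower semicontinuity of `∫ |∇v|^{p(x)}`
along `L¹`-converging exponents and weakly-`W^{1,1}_loc` converging maps, with the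
ensuing membership conclusions. -/
theorem statement6 {N d : ℕ} (Ω : Set (Euc N)) (hΩ : IsOpen Ω)
    (p : ℕ → Euc N → ℝ)
    (hpmeas : ∀ k, Measurable (p k)) (hp1 : ∀ k, ∀ x, 1 ≤ p k x)
    (hpint : ∀ k, IntegrableOn (p k) Ω)
    (p₀ : Euc N → ℝ) (hp₀meas : Measurable p₀) (hp₀1 : ∀ x, 1 ≤ p₀ x)
    (hpconv : TendstoL1 Ω p p₀)
    (v : ℕ → Euc N → Euc d) (G : ℕ → Euc N → Mat d N)
    (hvW11 : ∀ k, MemW11 Ω (v k) (G k))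
    (v₀ : Euc N → Euc d) (G₀ : Euc N → Mat d N)
    (hloc : ∀ A : Set (Euc N), CompactlyIn A Ω → MemW11 A v₀ G₀)
    (hweak : ∀ A : Set (Euc N), CompactlyIn A Ω →
      WeakL1Tendsto A v v₀ ∧
      ∀ i j, WeakL1TendstoS A (fun k x => G k x i j) (fun x => G₀ x i j)) :
    (emod Ω p₀ (fun x => mnorm (G₀ x)) ≤
      Filter.liminf (fun k => emod Ω (p k) (fun x => mnorm (G k x))) atTop) ∧
    ((∃ C : ℝ≥0∞, C < ⊤ ∧ ∀ k, emod Ω (p k) (fun x => mnorm (G k x)) ≤ C) →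
      emod Ω p₀ (fun x => mnorm (G₀ x)) < ⊤) ∧
    ((∃ C : ℝ≥0∞, C < ⊤ ∧ ∀ k, emod Ω (p k) (fun x => mnorm (G k x)) ≤ C) →
      Bornology.IsBounded Ω → HasLipschitzBoundary Ω →
      ContinuousOn p₀ (closure Ω) → IntegrableOn v₀ Ω →
      IsWeakGrad Ω v₀ G₀ ∧ emod Ω p₀ (fun x => ‖v₀ x‖) < ⊤ ∧
        emod Ω p₀ (fun x => mnorm (G₀ x)) < ⊤) := by
  have hG : ∀ k i j, IntegrableOn (fun x => G k x i j) Ω := fun k => (hvW11 k).2.1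
  have hG₀ : ∀ A, CompactlyIn A Ω → ∀ i j, IntegrableOn (fun x => G₀ x i j) A :=
    fun A hA => (hloc A hA).2.1
  have hlsc := emod_le_liminf hΩ hpmeas hp1 hp₀meas hp₀1 hpconv hG hG₀
    fun A hA => (hweak A hA).2
  have hfin : (∃ C : ℝ≥0∞, C < ⊤ ∧ ∀ k, emod Ω (p k) (fun x => mnorm (G k x)) ≤ C) →
      emod Ω p₀ (fun x => mnorm (G₀ x)) < ⊤ := by
    rintro ⟨C, hC, hbd⟩
    refine lt_of_le_of_lt (hlsc.trans ?_) hC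
    exact liminf_le_of_le (by isBoundedDefault) fun b hb => by
      obtain ⟨k, hk⟩ := hb.exists
      exact hk.trans (hbd k)
  refine ⟨hlsc, hfin, fun hC hΩb hL hpc hv₀ => ?_⟩
  have hwg : IsWeakGrad Ω v₀ G₀ :=
    isWeakGrad_of_compactlyIn hΩ fun A hA => (hloc A hA).2.2
  have hGm : ∀ i j, AEMeasurable (fun x => G₀ x i j) (volume.restrict Ω) := by
    intro i j
    obtain ⟨A, hA, -, hAΩ⟩ := exists_exhaustion hΩ
    rw [← hAΩ]
    exact aemeasurable_iUnion_iff.2 fun m => (hG₀ (A m) (hA m) i j).aemeasurable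
  exact ⟨hwg, emod_norm_lt_top hΩ hΩb hL hp₀1 hpc hwg hv₀ hGm (hfin hC), hfin hC⟩
end
end

section
/- Let Ω ⊂ ℝ^N be an open set with finite Lebesgue measure, let W: Ω × ℝ^{d×N} → [0,∞) be a Borel function, let a₀ ∈ L^∞(Ω) with a₀ ≥ 0 a.e., let p₀ ∈ 𝒫_b(Ω), and let {p_k} ⊂ L^∞(Ω) with p_k → p₀ in L^∞(Ω). Then for every 0 < δ < min{1/2, p₀^- − 1} there exists k₀ ∈ ℕ such that for every k ≥ k₀ and every U ∈ L¹(Ω;ℝ^{d×N}): ∫_Ω a₀(x) W^{p₀(x)−δ}(x,U(x)) dx ≤ 2δ ‖a₀‖_{L^∞(Ω)} 𝓛^N(Ω) + (2δ)^{−2δ} ∫_Ω a₀(x) W^{p_k(x)}(x,U(x)) dx. -/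
/-!
Off a null set, `p₀ - δ ≥ 1`, `|p_k - p₀| < δ` for all large `k`, and `0 ≤ a₀ ≤ ‖a₀‖_∞`. The
pointwise estimate `rpow_le_two_mul_add` then bounds `W ^ (p₀ - δ)` by the sum of the two
alternatives `W ≤ 2δ` and `W > 2δ`; multiplying by `a₀` and integrating gives the claim. The index
`k₀` depends only on the rate of convergence of the exponents, hence is uniform in `U`. No
measurability of the integrands is needed, since the only additivity used splits off a constant.
-/

open MeasureTheory Filter Topology Set
open scoped ENNReal NNReal

noncomputable section

/-- The pointwise dichotomy. If `w ≤ 2δ < 1`, raising to a power `s - δ ≥ 1` only decreases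
`2δ`; if `w > 2δ`, then `w ^ (s - δ) = w ^ t * w ^ (-r)` with `r = t - s + δ ∈ [0, 2δ]`. -/
lemma rpow_le_two_mul_add {w s t δ : ℝ} (hw : 0 ≤ w) (hδ0 : 0 < δ) (hδ1 : δ < 1 / 2)
    (hs : 1 ≤ s - δ) (hst : |t - s| < δ) :
    w ^ (s - δ) ≤ 2 * δ + (2 * δ) ^ (-(2 * δ)) * w ^ t := by
  have h2 : 0 < 2 * δ := by linarith
  obtain ⟨h3, h4⟩ := abs_lt.mp hst
  have hK : 0 < (2 * δ) ^ (-(2 * δ)) := Real.rpow_pos_of_pos h2 _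
  have hwt : 0 ≤ w ^ t := Real.rpow_nonneg hw t
  rcases le_or_gt w (2 * δ) with h | h
  · have h5 : w ^ (s - δ) ≤ 2 * δ :=
      calc w ^ (s - δ) ≤ (2 * δ) ^ (s - δ) := Real.rpow_le_rpow hw h (by linarith)
        _ ≤ (2 * δ) ^ (1 : ℝ) := Real.rpow_le_rpow_of_exponent_ge h2 (by linarith) hs
        _ = 2 * δ := Real.rpow_one _
    have := mul_nonneg hK.le hwt
    linarith
  · have hwp : 0 < w := h2.trans h
    have h5 : w ^ (s - δ) ≤ (2 * δ) ^ (-(2 * δ)) * w ^ t :=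
      calc w ^ (s - δ) = w ^ (-(t - s + δ)) * w ^ t := by
            rw [← Real.rpow_add hwp]; congr 1; ring
        _ ≤ (2 * δ) ^ (-(t - s + δ)) * w ^ t := by
            gcongr ?_ * _
            exact Real.rpow_le_rpow_of_nonpos h2 h.le (by linarith)
        _ ≤ (2 * δ) ^ (-(2 * δ)) * w ^ t := by
            gcongr ?_ * _
            exact Real.rpow_le_rpow_of_exponent_ge h2 (by linarith) (by linarith)
    linarith

/-- Lemma `lemtec`: the key modular estimate comparing the exponents
`p₀(·) - δ` and `p_k(·)` for `k` large. -/
theorem statement8 {N d : ℕ} (Ω : Set (Euc N)) (hΩ : IsOpen Ω)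
    (hΩfin : volume Ω < ⊤)
    (W : Euc N → Mat d N → ℝ)
    (hWmeas : Measurable fun q : Euc N × Mat d N => W q.1 q.2)
    (hWnn : ∀ x ξ, 0 ≤ W x ξ)
    (a₀ : Euc N → ℝ) (ha₀ : MemLinf Ω a₀)
    (ha₀nn : ∀ᵐ x ∂(volume.restrict Ω), 0 ≤ a₀ x)
    (p₀ : Euc N → ℝ) (hp₀ : IsPb Ω p₀)
    (p : ℕ → Euc N → ℝ) (hpLinf : ∀ k, MemLinf Ω (p k))
    (hpconv : TendstoLinf Ω p p₀)
    (δ : ℝ) (hδ0 : 0 < δ)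
    (hδ : δ < min (1/2) (essInf p₀ (volume.restrict Ω) - 1)) :
    ∃ k₀ : ℕ, ∀ k ≥ k₀, ∀ U : Euc N → Mat d N,
      (∀ i j, IntegrableOn (fun x => U x i j) Ω) →
      (∫⁻ x in Ω, ENNReal.ofReal (a₀ x * W x (U x) ^ (p₀ x - δ))) ≤
        ENNReal.ofReal (2 * δ * (eLpNorm a₀ ⊤ (volume.restrict Ω)).toReal * (volume Ω).toReal)
          + ENNReal.ofReal ((2 * δ) ^ (-(2 * δ)))
            * ∫⁻ x in Ω, ENNReal.ofReal (a₀ x * W x (U x) ^ p k x) := by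
  have hδ1 : δ < 1 / 2 := hδ.trans_le (min_le_left _ _)
  have hδ2 : δ < essInf p₀ (volume.restrict Ω) - 1 := hδ.trans_le (min_le_right _ _)
  -- In `ℝ` the essential infimum is meaningful only for functions that are essentially bounded
  -- below, which `IsPb` provides.
  have hbdd : IsBoundedUnder (· ≥ ·) (ae (volume.restrict Ω)) p₀ := by
    obtain ⟨-, pm, pM, -, h⟩ := hp₀
    exact ⟨pm, eventually_map.mpr (h.mono fun x hx => hx.1)⟩
  have hp₀ae : ∀ᵐ x ∂(volume.restrict Ω), essInf p₀ (volume.restrict Ω) ≤ p₀ x :=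
    ae_essInf_le hbdd
  obtain ⟨-, M, hM⟩ := ha₀
  have hfin : eLpNorm a₀ ⊤ (volume.restrict Ω) ≠ ⊤ := by
    rw [eLpNorm_exponent_top]
    exact (eLpNormEssSup_lt_top_of_ae_bound (C := M) hM).ne
  set A := (eLpNorm a₀ ⊤ (volume.restrict Ω)).toReal with hA
  have hA0 : 0 ≤ A := ENNReal.toReal_nonneg
  have haA : ∀ᵐ x ∂(volume.restrict Ω), a₀ x ≤ A := by
    filter_upwards [ae_le_eLpNormEssSup (f := a₀) (μ := volume.restrict Ω)] with x hx
    rw [← eLpNorm_exponent_top] at hx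
    have := ENNReal.toReal_mono hfin hx
    rw [toReal_enorm] at this
    exact (le_abs_self _).trans this
  have hev := (tendsto_order.1 hpconv).2 (ENNReal.ofReal δ) (ENNReal.ofReal_pos.mpr hδ0)
  obtain ⟨k₀, hk₀⟩ := eventually_atTop.mp hev
  refine ⟨k₀, fun k hk U _ => ?_⟩
  have hpk : ∀ᵐ x ∂(volume.restrict Ω), |p k x - p₀ x| < δ := by
    filter_upwards [ae_le_eLpNormEssSup (f := fun x => p k x - p₀ x)
      (μ := volume.restrict Ω)] with x hx
    rw [← eLpNorm_exponent_top] at hx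
    have h := hx.trans_lt (hk₀ k hk)
    rw [Real.enorm_eq_ofReal_abs] at h
    exact (ENNReal.ofReal_lt_ofReal_iff hδ0).mp h
  have h2 : 0 < 2 * δ := by linarith
  have hK : 0 ≤ (2 * δ) ^ (-(2 * δ)) := Real.rpow_nonneg h2.le _
  calc (∫⁻ x in Ω, ENNReal.ofReal (a₀ x * W x (U x) ^ (p₀ x - δ)))
      ≤ ∫⁻ x in Ω, (ENNReal.ofReal (2 * δ * A) + ENNReal.ofReal ((2 * δ) ^ (-(2 * δ)))
          * ENNReal.ofReal (a₀ x * W x (U x) ^ p k x)) := by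
        apply lintegral_mono_ae
        filter_upwards [hp₀ae, haA, hpk, ha₀nn] with x h1 h3 h4 h5
        have hWp : 0 ≤ W x (U x) ^ p k x := Real.rpow_nonneg (hWnn _ _) _
        rw [← ENNReal.ofReal_mul hK, ← ENNReal.ofReal_add (by positivity) (by positivity)]
        apply ENNReal.ofReal_le_ofReal
        have h6 := mul_le_mul_of_nonneg_left
          (rpow_le_two_mul_add (hWnn x (U x)) hδ0 hδ1 (by linarith) h4) h5
        have h7 := mul_le_mul_of_nonneg_left h3 h2.le
        linarith
    _ = _ := by
        rw [lintegral_add_left measurable_const, lintegral_const_mul' _ _ ENNReal.ofReal_ne_top,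
          lintegral_const, Measure.restrict_apply_univ,
          ENNReal.ofReal_mul (p := 2 * δ * A) (by positivity), ENNReal.ofReal_toReal hΩfin.ne]
end
end
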